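/- arXiv:2108.13849 — 2 statements merged into one kernel-verified Lean document; each statement's English description precedes it below -/
import Mathlib

section
/- Let q = ux + 2 + 2g, z = q² g⁻¹, s = xv + uy + (−(1/2)ux + g − 1)ζ − 2(1 + g), ω = q g⁻¹ s and θ = s² g⁻¹, all elements of D. Then the center of D equals the k-subalgebra generated by z, ω, θ, and this center is isomorphic as a k-algebra to k[X,Y,Z]/(XZ − Y²). -/
open FreeAlgebra

/-- Generators of the double of the Jordan plane. -/
inductive JGen : Type
  | u | v | zeta | g | ginv | x | y

variable (k : Type) [Field k] [IsAlgClosed k] [CharZero k]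

/-- The defining relations of the double of the Jordan plane. -/
inductive JRel : FreeAlgebra k JGen → FreeAlgebra k JGen → Prop
  | gginv : JRel (ι k .g * ι k .ginv) 1
  | ginvg : JRel (ι k .ginv * ι k .g) 1
  | zg : JRel (ι k .zeta * ι k .g) (ι k .g * ι k .zeta)
  | gx : JRel (ι k .g * ι k .x) (ι k .x * ι k .g)
  | gy : JRel (ι k .g * ι k .y) (ι k .y * ι k .g + ι k .x * ι k .g)
  | zy : JRel (ι k .zeta * ι k .y) (ι k .y * ι k .zeta + ι k .y)
  | zx : JRel (ι k .zeta * ι k .x) (ι k .x * ι k .zeta + ι k .x)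
  | ug : JRel (ι k .u * ι k .g) (ι k .g * ι k .u)
  | vg : JRel (ι k .v * ι k .g) (ι k .g * ι k .v + ι k .g * ι k .u)
  | vz : JRel (ι k .v * ι k .zeta) (ι k .zeta * ι k .v + ι k .v)
  | uz : JRel (ι k .u * ι k .zeta) (ι k .zeta * ι k .u + ι k .u)
  | yx : JRel (ι k .y * ι k .x) (ι k .x * ι k .y - (1/2 : k) • (ι k .x * ι k .x))
  | vu : JRel (ι k .v * ι k .u) (ι k .u * ι k .v - (1/2 : k) • (ι k .u * ι k .u))
  | ux : JRel (ι k .u * ι k .x) (ι k .x * ι k .u)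
  | vx : JRel (ι k .v * ι k .x) (ι k .x * ι k .v + (1 - ι k .g) + ι k .x * ι k .u)
  | uy : JRel (ι k .u * ι k .y) (ι k .y * ι k .u + (1 - ι k .g))
  | vy : JRel (ι k .v * ι k .y) (ι k .y * ι k .v - ι k .g * ι k .zeta + ι k .y * ι k .u)

/-- The double of the Jordan plane, as the presented algebra. -/
def D : Type := RingQuot (JRel k)

noncomputable instance : Ring (D k) := inferInstanceAs (Ring (RingQuot (JRel k)))
noncomputable instance : Algebra k (D k) := inferInstanceAs (Algebra k (RingQuot (JRel k)))

/-- The canonical projection from the free algebra onto `D`. -/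
noncomputable def Dmk : FreeAlgebra k JGen →ₐ[k] D k := RingQuot.mkAlgHom k (JRel k)

noncomputable def DU : D k := Dmk k (ι k .u)
noncomputable def DV : D k := Dmk k (ι k .v)
noncomputable def DZ : D k := Dmk k (ι k .zeta)
noncomputable def DG : D k := Dmk k (ι k .g)
noncomputable def DGinv : D k := Dmk k (ι k .ginv)
noncomputable def DX : D k := Dmk k (ι k .x)
noncomputable def DY : D k := Dmk k (ι k .y)


set_option linter.unusedSectionVars false

/-- index set of monomials x^a g^b q^c s^d -/
abbrev JIdx : Type := ℤ × ℤ × ℕ × ℕ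

abbrev JB : Type := JIdx →₀ k

noncomputable def je (a b : ℤ) (c d : ℕ) : JB k := Finsupp.single (a, b, c, d) 1

noncomputable def jop (f : ℤ → ℤ → ℕ → ℕ → JB k) : Module.End k (JB k) :=
  Finsupp.linearCombination k (fun i : JIdx => f i.1 i.2.1 i.2.2.1 i.2.2.2)

theorem jop_e (f : ℤ → ℤ → ℕ → ℕ → JB k) (a b : ℤ) (c d : ℕ) :
    jop k f (je k a b c d) = f a b c d := by
  simp [jop, je]

theorem jext {M : Type*} [AddCommMonoid M] [Module k M] {f g : JB k →ₗ[k] M}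
    (h : ∀ a b c d, f (je k a b c d) = g (je k a b c d)) : f = g := by
  refine Finsupp.lhom_ext' fun i => LinearMap.ext_ring ?_
  obtain ⟨a, b, c, d⟩ := i
  exact h a b c d

noncomputable def oX : Module.End k (JB k) := jop k fun a b c d => je k (a+1) b c d
noncomputable def oG : Module.End k (JB k) := jop k fun a b c d => je k a (b+1) c d
noncomputable def oGi : Module.End k (JB k) := jop k fun a b c d => je k a (b-1) c d
noncomputable def oZ : Module.End k (JB k) := jop k fun a b c d => (a : k) • je k a b c d
noncomputable def oU : Module.End k (JB k) := jop k fun a b c d =>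
  je k (a-1) b (c+1) d - (2:k) • je k (a-1) b c d - (2:k) • je k (a-1) (b+1) c d
noncomputable def oY : Module.End k (JB k) := jop k fun a b c d =>
  (-(1/2 : k) * (a + 2 * b + c + d)) • je k (a+1) b c d
noncomputable def oV : Module.End k (JB k) := jop k fun a b c d =>
  je k (a-1) b c (d+1) + ((1/2 : k) * (2 * a + 2 * b + c + d)) • je k (a-1) b (c+1) d
   + (2 - (a + 2 * b + c + d) : k) • je k (a-1) b c d
   + (2 - (a + 2 * b + c + d) - 2 * a : k) • je k (a-1) (b+1) c d

noncomputable def ogen : JGen → Module.End k (JB k)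
  | .u => oU k
  | .v => oV k
  | .zeta => oZ k
  | .g => oG k
  | .ginv => oGi k
  | .x => oX k
  | .y => oY k

theorem ogen_rel ⦃a b : FreeAlgebra k JGen⦄ (h : JRel k a b) :
    FreeAlgebra.lift k (ogen k) a = FreeAlgebra.lift k (ogen k) b := by
  have h2 : (2:k) ≠ 0 := two_ne_zero
  cases h <;> refine jext k fun a b c d => ?_ <;>
  simp only [map_mul, map_add, map_sub, map_one, map_smul, FreeAlgebra.lift_ι_apply, ogen,
    Module.End.mul_apply, LinearMap.add_apply, LinearMap.sub_apply, LinearMap.smul_apply,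
    Module.End.one_apply, oX, oG, oGi, oZ, oU, oY, oV, jop_e, smul_add, smul_sub, smul_smul,
    add_sub_cancel_right, sub_add_cancel] <;>
  push_cast
  all_goals (match_scalars <;> ring_nf)

set_option linter.unusedSimpArgs false

/-- the representation -/
noncomputable def jphi : D k →ₐ[k] Module.End k (JB k) :=
  RingQuot.liftAlgHom k ⟨FreeAlgebra.lift k (ogen k), ogen_rel k⟩

theorem jphi_mk (a : FreeAlgebra k JGen) : jphi k (Dmk k a) = FreeAlgebra.lift k (ogen k) a :=
  RingQuot.liftAlgHom_mkAlgHom_apply k (FreeAlgebra.lift k (ogen k)) (ogen_rel k) a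

theorem phiU : jphi k (DU k) = oU k := by simp [DU, jphi_mk, ogen]
theorem phiV : jphi k (DV k) = oV k := by simp [DV, jphi_mk, ogen]
theorem phiZ : jphi k (DZ k) = oZ k := by simp [DZ, jphi_mk, ogen]
theorem phiG : jphi k (DG k) = oG k := by simp [DG, jphi_mk, ogen]
theorem phiGi : jphi k (DGinv k) = oGi k := by simp [DGinv, jphi_mk, ogen]
theorem phiX : jphi k (DX k) = oX k := by simp [DX, jphi_mk, ogen]
theorem phiY : jphi k (DY k) = oY k := by simp [DY, jphi_mk, ogen]

theorem Drel {a b : FreeAlgebra k JGen} (h : JRel k a b) : Dmk k a = Dmk k b :=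
  RingQuot.mkAlgHom_rel k h

theorem r_gginv : DG k * DGinv k = 1 := by
  have h := Drel k .gginv
  simp only [map_mul, map_sub, map_add, map_one] at h
  exact h
theorem r_ginvg : DGinv k * DG k = 1 := by
  have h := Drel k .ginvg
  simp only [map_mul, map_sub, map_add, map_one] at h
  exact h
theorem r_zg : DZ k * DG k = DG k * DZ k := by
  have h := Drel k .zg
  simp only [map_mul, map_sub, map_add, map_one] at h
  exact h
theorem r_gx : DG k * DX k = DX k * DG k := by
  have h := Drel k .gx
  simp only [map_mul, map_sub, map_add, map_one] at h
  exact h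
theorem r_gy : DG k * DY k = DY k * DG k + DX k * DG k := by
  have h := Drel k .gy
  simp only [map_mul, map_sub, map_add, map_one] at h
  exact h
theorem r_zy : DZ k * DY k = DY k * DZ k + DY k := by
  have h := Drel k .zy
  simp only [map_mul, map_sub, map_add, map_one] at h
  exact h
theorem r_zx : DZ k * DX k = DX k * DZ k + DX k := by
  have h := Drel k .zx
  simp only [map_mul, map_sub, map_add, map_one] at h
  exact h
theorem r_ug : DU k * DG k = DG k * DU k := by
  have h := Drel k .ug
  simp only [map_mul, map_sub, map_add, map_one] at h
  exact h
theorem r_vg : DV k * DG k = DG k * DV k + DG k * DU k := by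
  have h := Drel k .vg
  simp only [map_mul, map_sub, map_add, map_one] at h
  exact h
theorem r_vz : DV k * DZ k = DZ k * DV k + DV k := by
  have h := Drel k .vz
  simp only [map_mul, map_sub, map_add, map_one] at h
  exact h
theorem r_uz : DU k * DZ k = DZ k * DU k + DU k := by
  have h := Drel k .uz
  simp only [map_mul, map_sub, map_add, map_one] at h
  exact h
theorem r_yx : DY k * DX k = DX k * DY k - (1/2 : k) • (DX k * DX k) := by
  have h := Drel k .yx
  simp only [map_mul, map_sub, map_smul] at h
  exact h
theorem r_vu : DV k * DU k = DU k * DV k - (1/2 : k) • (DU k * DU k) := by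
  have h := Drel k .vu
  simp only [map_mul, map_sub, map_smul] at h
  exact h
theorem r_ux : DU k * DX k = DX k * DU k := by
  have h := Drel k .ux
  simp only [map_mul, map_sub, map_add, map_one] at h
  exact h
theorem r_vx : DV k * DX k = DX k * DV k + (1 - DG k) + DX k * DU k := by
  have h := Drel k .vx
  simp only [map_mul, map_sub, map_add, map_one] at h
  exact h
theorem r_uy : DU k * DY k = DY k * DU k + (1 - DG k) := by
  have h := Drel k .uy
  simp only [map_mul, map_sub, map_add, map_one] at h
  exact h
theorem r_vy : DV k * DY k = DY k * DV k - DG k * DZ k + DY k * DU k := by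
  have h := Drel k .vy
  simp only [map_mul, map_sub, map_add, map_one] at h
  exact h

noncomputable def gU : (D k)ˣ := ⟨DG k, DGinv k, r_gginv k, r_ginvg k⟩

theorem c_gix : DGinv k * DX k = DX k * DGinv k := by
  have h : Commute (DX k) (gU k : D k) := (r_gx k).symm
  exact h.units_inv_right.eq.symm
theorem c_giu : DGinv k * DU k = DU k * DGinv k := by
  have h : Commute (DU k) (gU k : D k) := r_ug k
  exact h.units_inv_right.eq.symm
theorem c_giz : DGinv k * DZ k = DZ k * DGinv k := by
  have h : Commute (DZ k) (gU k : D k) := r_zg k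
  exact h.units_inv_right.eq.symm

theorem r_vgi : DV k * DGinv k = DGinv k * DV k - DU k * DGinv k := by
  have h := congrArg (fun t => DGinv k * t * DGinv k) (r_vg k)
  simp only [mul_add, add_mul] at h
  rw [← mul_assoc (DGinv k), mul_assoc (DGinv k * DV k), r_gginv, ← mul_assoc (DGinv k),
    ← mul_assoc (DGinv k), r_ginvg] at h
  simp only [mul_one, one_mul] at h
  rw [h]; abel

theorem r_ygi : DY k * DGinv k = DGinv k * DY k + DX k * DGinv k := by
  have h := congrArg (fun t => DGinv k * t * DGinv k) (r_gy k)
  simp only [mul_add, add_mul] at h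
  rw [← mul_assoc (DGinv k), r_ginvg, ← mul_assoc (DGinv k), mul_assoc (DGinv k * DY k), r_gginv,
    ← mul_assoc (DGinv k), mul_assoc (DGinv k * DX k), r_gginv, c_gix] at h
  simp only [mul_one, one_mul] at h
  exact h

/-- a (left) invariance argument -/
theorem D_top (V : Submodule k (D k)) (h1 : (1 : D k) ∈ V)
    (hU : ∀ w ∈ V, DU k * w ∈ V) (hV : ∀ w ∈ V, DV k * w ∈ V) (hZ : ∀ w ∈ V, DZ k * w ∈ V)
    (hG : ∀ w ∈ V, DG k * w ∈ V) (hGi : ∀ w ∈ V, DGinv k * w ∈ V) (hX : ∀ w ∈ V, DX k * w ∈ V)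
    (hY : ∀ w ∈ V, DY k * w ∈ V) (d : D k) : d ∈ V := by
  have key : ∀ a : FreeAlgebra k JGen, ∀ w ∈ V, Dmk k a * w ∈ V := by
    intro a
    induction a using FreeAlgebra.induction with
    | grade0 r =>
      intro w hw
      rw [AlgHom.commutes, ← Algebra.smul_def]
      exact V.smul_mem r hw
    | grade1 i =>
      intro w hw
      cases i
      · exact hU w hw
      · exact hV w hw
      · exact hZ w hw
      · exact hG w hw
      · exact hGi w hw
      · exact hX w hw
      · exact hY w hw
    | mul a b ha hb =>
      intro w hw
      rw [map_mul, mul_assoc]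
      exact ha _ (hb _ hw)
    | add a b ha hb =>
      intro w hw
      rw [map_add, add_mul]
      exact V.add_mem (ha _ hw) (hb _ hw)
  obtain ⟨a, rfl⟩ := RingQuot.mkAlgHom_surjective k (JRel k) d
  have := key a 1 h1
  rw [mul_one] at this
  exact this

/-- PBW monomials -/
structure JI where
  a : ℕ
  b : ℕ
  c : ℤ
  l : ℕ
  j : ℕ

noncomputable def jm (i : JI) (f : Polynomial k) : D k :=
  DX k ^ i.a * (DU k ^ i.b * (((gU k ^ i.c : (D k)ˣ) : D k) *
    (DV k ^ i.l * (DY k ^ i.j * Polynomial.aeval (DZ k) f))))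

noncomputable def jV : Submodule k (D k) :=
  Submodule.span k {d | ∃ i f, d = jm k i f}

theorem jm_mem (i : JI) (f : Polynomial k) : jm k i f ∈ jV k := Submodule.subset_span ⟨i, f, rfl⟩

theorem hX : ∀ w ∈ jV k, DX k * w ∈ jV k := by
  intro w hw
  induction hw using Submodule.span_induction with
  | mem w h =>
    obtain ⟨i, f, rfl⟩ := h
    convert jm_mem k ⟨i.a + 1, i.b, i.c, i.l, i.j⟩ f using 1
    simp only [jm, pow_succ', mul_assoc]
  | zero => simp
  | add x y _ _ hx hy => rw [mul_add]; exact add_mem hx hy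
  | smul r x _ hx => rw [mul_smul_comm]; exact (jV k).smul_mem r hx

theorem hU : ∀ w ∈ jV k, DU k * w ∈ jV k := by
  intro w hw
  induction hw using Submodule.span_induction with
  | mem w h =>
    obtain ⟨i, f, rfl⟩ := h
    convert jm_mem k ⟨i.a, i.b + 1, i.c, i.l, i.j⟩ f using 1
    have h : Commute (DU k) (DX k ^ i.a) := Commute.pow_right (r_ux k) _
    simp only [jm, pow_succ', mul_assoc]
    rw [← mul_assoc, h.eq, mul_assoc]
  | zero => simp
  | add x y _ _ hx hy => rw [mul_add]; exact add_mem hx hy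
  | smul r x _ hx => rw [mul_smul_comm]; exact (jV k).smul_mem r hx

theorem hGz (n : ℤ) : ∀ w ∈ jV k, ((gU k ^ n : (D k)ˣ) : D k) * w ∈ jV k := by
  intro w hw
  induction hw using Submodule.span_induction with
  | mem w h =>
    obtain ⟨i, f, rfl⟩ := h
    convert jm_mem k ⟨i.a, i.b, n + i.c, i.l, i.j⟩ f using 1
    have h0 : Commute (DX k) (gU k : D k) := (r_gx k).symm
    have h1 : Commute (DU k) (gU k : D k) := r_ug k
    have h2 := (h0.pow_left i.a).units_zpow_right n
    have h3 := (h1.pow_left i.b).units_zpow_right n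
    simp only [jm, zpow_add, Units.val_mul, mul_assoc]
    rw [← mul_assoc, ← h2.eq, mul_assoc]
    congr 1
    rw [← mul_assoc, ← h3.eq, mul_assoc]
  | zero => simp
  | add x y _ _ hx hy => rw [mul_add]; exact add_mem hx hy
  | smul r x _ hx => rw [mul_smul_comm]; exact (jV k).smul_mem r hx

theorem hG : ∀ w ∈ jV k, DG k * w ∈ jV k := by
  intro w hw
  have := hGz k 1 w hw
  rwa [zpow_one] at this

theorem hGi : ∀ w ∈ jV k, DGinv k * w ∈ jV k := by
  intro w hw
  have := hGz k (-1) w hw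
  rwa [zpow_neg_one] at this

theorem pow_ind {P : D k → Prop} {t : D k} (h : ∀ w, P w → P (t * w)) (n : ℕ) (w : D k) (hw : P w) :
    P (t ^ n * w) := by
  induction n with
  | zero => simpa using hw
  | succ n ih => rw [pow_succ', mul_assoc]; exact h _ ih

theorem zpow_ind {P : D k → Prop} (h : ∀ w, P w → P (DG k * w)) (h' : ∀ w, P w → P (DGinv k * w))
    (n : ℤ) (w : D k) (hw : P w) : P (((gU k ^ n : (D k)ˣ) : D k) * w) := by
  induction n using Int.induction_on with
  | zero => simpa using hw
  | succ n ih =>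
    rw [add_comm, zpow_add, Units.val_mul, zpow_one, mul_assoc]; exact h _ ih
  | pred n ih =>
    rw [sub_eq_add_neg, add_comm, zpow_add, Units.val_mul, zpow_neg_one, mul_assoc]; exact h' _ ih

theorem hgen (t : D k) (P : D k → Prop) (hP : ∀ w, P w → w ∈ jV k ∧ t * w ∈ jV k)
    (hx : ∀ w, P w → P (DX k * w)) (hu : ∀ w, P w → P (DU k * w)) (hg : ∀ w, P w → P (DG k * w))
    (hgi : ∀ w, P w → P (DGinv k * w))
    (hm : ∀ (l j : ℕ) (f : Polynomial k), P (DV k ^ l * (DY k ^ j * Polynomial.aeval (DZ k) f))) :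
    ∀ w ∈ jV k, t * w ∈ jV k := by
  intro w hw
  induction hw using Submodule.span_induction with
  | mem w h =>
    obtain ⟨i, f, rfl⟩ := h
    refine (hP _ ?_).2
    exact pow_ind k hx _ _ (pow_ind k hu _ _ (zpow_ind k hg hgi _ _ (hm _ _ _)))
  | zero => simp
  | add x y _ _ hx hy => rw [mul_add]; exact add_mem hx hy
  | smul r x _ hx => rw [mul_smul_comm]; exact (jV k).smul_mem r hx

theorem jm_mem' (l j : ℕ) (f : Polynomial k) :
    DV k ^ l * (DY k ^ j * Polynomial.aeval (DZ k) f) ∈ jV k := by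
  convert jm_mem k ⟨0, 0, 0, l, j⟩ f using 1
  simp [jm]

theorem hV : ∀ w ∈ jV k, DV k * w ∈ jV k := by
  refine hgen k _ (fun w => w ∈ jV k ∧ DV k * w ∈ jV k) (fun _ h => h) ?_ ?_ ?_ ?_ ?_
  · rintro w ⟨h1, h2⟩
    refine ⟨hX k _ h1, ?_⟩
    rw [← mul_assoc, r_vx]
    simp only [add_mul, sub_mul, one_mul, mul_assoc]
    exact add_mem (add_mem (hX k _ h2) (sub_mem h1 (hG k _ h1))) (hX k _ (hU k _ h1))
  · rintro w ⟨h1, h2⟩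
    refine ⟨hU k _ h1, ?_⟩
    rw [← mul_assoc, r_vu]
    simp only [sub_mul, smul_mul_assoc, mul_assoc]
    exact sub_mem (hU k _ h2) ((jV k).smul_mem _ (hU k _ (hU k _ h1)))
  · rintro w ⟨h1, h2⟩
    refine ⟨hG k _ h1, ?_⟩
    rw [← mul_assoc, r_vg]
    simp only [add_mul, mul_assoc]
    exact add_mem (hG k _ h2) (hG k _ (hU k _ h1))
  · rintro w ⟨h1, h2⟩
    refine ⟨hGi k _ h1, ?_⟩
    rw [← mul_assoc, r_vgi]
    simp only [sub_mul, mul_assoc]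
    exact sub_mem (hGi k _ h2) (hU k _ (hGi k _ h1))
  · intro l j f
    refine ⟨jm_mem' k _ _ _, ?_⟩
    rw [← mul_assoc, ← pow_succ']
    exact jm_mem' k _ _ _

theorem hZ : ∀ w ∈ jV k, DZ k * w ∈ jV k := by
  have hyv : ∀ (j : ℕ) (f : Polynomial k), DY k ^ j * Polynomial.aeval (DZ k) f ∈ jV k ∧
      DZ k * (DY k ^ j * Polynomial.aeval (DZ k) f) ∈ jV k := by
    intro j
    induction j with
    | zero =>
      intro f
      have h1 := jm_mem' k 0 0 f
      have h2 := jm_mem' k 0 0 (Polynomial.X * f)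
      simp only [pow_zero, one_mul, map_mul, Polynomial.aeval_X] at h1 h2 ⊢
      exact ⟨h1, h2⟩
    | succ j ih =>
      intro f
      have h1 := jm_mem' k 0 (j+1) f
      have h2 := jm_mem' k 0 (j+1) ((Polynomial.X + ((j + 1 : ℕ) : Polynomial k)) * f)
      simp only [pow_zero, one_mul] at h1 h2
      refine ⟨h1, ?_⟩
      convert h2 using 1
      have : ∀ n : ℕ, DZ k * DY k ^ n = DY k ^ n * (DZ k + (n : D k)) := by
        intro n
        induction n with
        | zero => simp
        | succ n ih =>
          rw [pow_succ, ← mul_assoc, ih, mul_assoc, add_mul, r_zy, mul_assoc]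
          congr 1
          have : (n : D k) * DY k = DY k * n := (Nat.cast_commute n _).eq
          rw [this]; push_cast; noncomm_ring
      rw [← mul_assoc, this, mul_assoc]
      simp
  refine hgen k _ (fun w => w ∈ jV k ∧ DZ k * w ∈ jV k) (fun _ h => h) ?_ ?_ ?_ ?_ ?_
  · rintro w ⟨h1, h2⟩
    refine ⟨hX k _ h1, ?_⟩
    rw [← mul_assoc, r_zx]
    simp only [add_mul, mul_assoc]
    exact add_mem (hX k _ h2) (hX k _ h1)
  · rintro w ⟨h1, h2⟩
    refine ⟨hU k _ h1, ?_⟩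
    have := r_uz k
    rw [← sub_eq_iff_eq_add] at this
    rw [← mul_assoc, ← this]
    simp only [sub_mul, mul_assoc]
    exact sub_mem (hU k _ h2) (hU k _ h1)
  · rintro w ⟨h1, h2⟩
    refine ⟨hG k _ h1, ?_⟩
    rw [← mul_assoc, r_zg, mul_assoc]
    exact hG k _ h2
  · rintro w ⟨h1, h2⟩
    refine ⟨hGi k _ h1, ?_⟩
    rw [← mul_assoc, ← c_giz, mul_assoc]
    exact hGi k _ h2
  · intro l j f
    refine pow_ind k (P := fun w => w ∈ jV k ∧ DZ k * w ∈ jV k) ?_ _ _ (hyv j f)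
    rintro w ⟨h1, h2⟩
    refine ⟨hV k _ h1, ?_⟩
    have := r_vz k
    rw [← sub_eq_iff_eq_add] at this
    rw [← mul_assoc, ← this]
    simp only [sub_mul, mul_assoc]
    exact sub_mem (hV k _ h2) (hV k _ h1)

theorem hY : ∀ w ∈ jV k, DY k * w ∈ jV k := by
  have huy : DY k * DU k = DU k * DY k - (1 - DG k) := by
    rw [r_uy]; abel
  refine hgen k _ (fun w => w ∈ jV k ∧ DY k * w ∈ jV k) (fun _ h => h) ?_ ?_ ?_ ?_ ?_
  · rintro w ⟨h1, h2⟩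
    refine ⟨hX k _ h1, ?_⟩
    rw [← mul_assoc, r_yx]
    simp only [sub_mul, smul_mul_assoc, mul_assoc]
    exact sub_mem (hX k _ h2) ((jV k).smul_mem _ (hX k _ (hX k _ h1)))
  · rintro w ⟨h1, h2⟩
    refine ⟨hU k _ h1, ?_⟩
    rw [← mul_assoc, huy]
    simp only [sub_mul, one_mul, mul_assoc]
    exact sub_mem (hU k _ h2) (sub_mem h1 (hG k _ h1))
  · rintro w ⟨h1, h2⟩
    refine ⟨hG k _ h1, ?_⟩
    have : DY k * DG k = DG k * DY k - DX k * DG k := by rw [r_gy]; abel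
    rw [← mul_assoc, this]
    simp only [sub_mul, mul_assoc]
    exact sub_mem (hG k _ h2) (hX k _ (hG k _ h1))
  · rintro w ⟨h1, h2⟩
    refine ⟨hGi k _ h1, ?_⟩
    rw [← mul_assoc, r_ygi]
    simp only [add_mul, mul_assoc]
    exact add_mem (hGi k _ h2) (hX k _ (hGi k _ h1))
  · intro l j f
    refine pow_ind k (P := fun w => w ∈ jV k ∧ DY k * w ∈ jV k) ?_ _ _ ?_
    · rintro w ⟨h1, h2⟩
      refine ⟨hV k _ h1, ?_⟩
      have : DY k * DV k = DV k * DY k + DG k * DZ k - (DU k * DY k - (1 - DG k)) := by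
        rw [r_vy, huy]; abel
      rw [← mul_assoc, this]
      simp only [sub_mul, add_mul, one_mul, mul_assoc]
      exact sub_mem (add_mem (hV k _ h2) (hG k _ (hZ k _ h1)))
        (sub_mem (hU k _ h2) (sub_mem h1 (hG k _ h1)))
    · have h1 := jm_mem' k 0 j f
      have h2 := jm_mem' k 0 (j+1) f
      simp only [pow_zero, one_mul, pow_succ', mul_assoc] at h1 h2
      exact ⟨h1, h2⟩

theorem jV_top (d : D k) : d ∈ jV k := by
  refine D_top k (jV k) ?_ (hU k) (hV k) (hZ k) (hG k) (hGi k) (hX k) (hY k) d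
  have := jm_mem' k 0 0 1
  simpa using this

theorem phi_gz (n : ℤ) (a b : ℤ) (c d : ℕ) :
    jphi k ((gU k ^ n : (D k)ˣ) : D k) (je k a b c d) = je k a (b + n) c d := by
  induction n using Int.induction_on generalizing b with
  | zero => simp
  | succ n ih =>
    rw [zpow_add, Units.val_mul, map_mul, Module.End.mul_apply, zpow_one]
    have : jphi k (gU k : D k) = oG k := phiG k
    rw [this, oG, jop_e, ih]
    congr 1; ring
  | pred n ih =>
    rw [sub_eq_add_neg, zpow_add, Units.val_mul, map_mul, Module.End.mul_apply, zpow_neg_one]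
    have : jphi k ((gU k)⁻¹ : (D k)ˣ) = oGi k := phiGi k
    rw [this, oGi, jop_e, ih]
    congr 1; ring

noncomputable def jL (n : ℕ) : Submodule k (JB k) :=
  Submodule.span k {w | ∃ a b c d, w = je k a b c d ∧ 2 * d + c < n}

theorem je_mem {n : ℕ} (a b : ℤ) (c d : ℕ) (h : 2 * d + c < n) : je k a b c d ∈ jL k n :=
  Submodule.subset_span ⟨a, b, c, d, rfl, h⟩

theorem jL_coeff {n : ℕ} {w : JB k} (hw : w ∈ jL k n) (a b : ℤ) (c d : ℕ) (h : n ≤ 2 * d + c) :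
    w (a, b, c, d) = 0 := by
  induction hw using Submodule.span_induction with
  | mem w hw =>
    obtain ⟨a', b', c', d', rfl, h'⟩ := hw
    rw [je, Finsupp.single_apply, if_neg]
    intro h2
    simp only [Prod.mk.injEq] at h2
    omega
  | zero => rfl
  | add x y _ _ hx hy => rw [Finsupp.add_apply, hx, hy, add_zero]
  | smul r x _ hx => rw [Finsupp.smul_apply, hx, smul_zero]

theorem jL_map {n m : ℕ} (T : Module.End k (JB k))
    (h : ∀ a b c d, 2 * d + c < n → T (je k a b c d) ∈ jL k m) (w : JB k) (hw : w ∈ jL k n) :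
    T w ∈ jL k m := by
  induction hw using Submodule.span_induction with
  | mem w hw =>
    obtain ⟨a', b', c', d', rfl, h'⟩ := hw
    exact h _ _ _ _ h'
  | zero => simp
  | add x y _ _ hx hy => rw [map_add]; exact add_mem hx hy
  | smul r x _ hx => rw [map_smul]; exact Submodule.smul_mem _ _ hx

/-- leading term predicate -/
def Ld (w : JB k) (a b : ℤ) (c d : ℕ) : Prop := w - je k a b c d ∈ jL k (2 * d + c)

theorem Ld_step (T : Module.End k (JB k)) (p : ℤ) (r : ℤ) (m n : ℕ)
    (h : ∀ a b c d, Ld k (T (je k a b c d)) (a + p) (b + r) (c + m) (d + n))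
    {w : JB k} {a b : ℤ} {c d : ℕ} (hw : Ld k w a b c d) :
    Ld k (T w) (a + p) (b + r) (c + m) (d + n) := by
  have h1 : T (w - je k a b c d) ∈ jL k (2 * (d + n) + (c + m)) := by
    refine jL_map k T ?_ _ hw
    intro a' b' c' d' hlt
    have h2 := h a' b' c' d'
    have h3 : jL k (2 * (d' + n) + (c' + m)) ≤ jL k (2 * (d + n) + (c + m)) := by
      refine Submodule.span_mono ?_
      rintro w ⟨a, b, c, d, rfl, h⟩
      exact ⟨a, b, c, d, rfl, by omega⟩
    have h4 : je k (a' + p) (b' + r) (c' + m) (d' + n) ∈ jL k (2 * (d + n) + (c + m)) :=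
      je_mem k _ _ _ _ (by omega)
    simpa using add_mem (h3 h2) h4
  have h5 := h a b c d
  unfold Ld at h5 ⊢
  rw [map_sub] at h1
  simpa using add_mem h1 h5

theorem Ld_iter (T : Module.End k (JB k)) (p : ℤ) (m n : ℕ)
    (h : ∀ a b c d, Ld k (T (je k a b c d)) (a + p) (b + 0) (c + m) (d + n)) (t : ℕ)
    {w : JB k} {a b : ℤ} {c d : ℕ} (hw : Ld k w a b c d) :
    Ld k ((T ^ t) w) (a + t * p) b (c + t * m) (d + t * n) := by
  induction t with
  | zero => simpa using hw
  | succ t ih =>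
    rw [pow_succ', Module.End.mul_apply]
    convert Ld_step k T p 0 m n h ih using 1 <;> push_cast <;> ring

theorem LdX (a b : ℤ) (c d : ℕ) : Ld k (oX k (je k a b c d)) (a + 1) (b + 0) (c + 0) (d + 0) := by
  simp [Ld, oX, jop_e]

theorem LdU (a b : ℤ) (c d : ℕ) :
    Ld k (oU k (je k a b c d)) (a + (-1)) (b + 0) (c + 1) (d + 0) := by
  simp only [Ld, oU, jop_e, add_zero]
  have : ∀ A B C : JB k, A - B - C - A = -(B + C) := by intros; abel
  rw [← sub_eq_add_neg, this]
  exact neg_mem (add_mem (Submodule.smul_mem _ _ (je_mem k _ _ _ _ (by omega)))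
    (Submodule.smul_mem _ _ (je_mem k _ _ _ _ (by omega))))

theorem LdV (a b : ℤ) (c d : ℕ) :
    Ld k (oV k (je k a b c d)) (a + (-1)) (b + 0) (c + 0) (d + 1) := by
  simp only [Ld, oV, jop_e, add_zero]
  rw [← sub_eq_add_neg, add_assoc, add_assoc, add_sub_cancel_left]
  exact add_mem (Submodule.smul_mem _ _ (je_mem k _ _ _ _ (by omega)))
    (add_mem (Submodule.smul_mem _ _ (je_mem k _ _ _ _ (by omega)))
    (Submodule.smul_mem _ _ (je_mem k _ _ _ _ (by omega))))

noncomputable def kap (j : ℕ) (w : k) : k := ∏ t ∈ Finset.range j, (-(1/2 : k) * (w + t))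

theorem Y_pow (j : ℕ) (a b : ℤ) :
    (oY k ^ j) (je k a b 0 0) = kap k j (a + 2 * b) • je k (a + j) b 0 0 := by
  induction j with
  | zero => simp [kap]
  | succ j ih =>
    rw [pow_succ', Module.End.mul_apply, ih, map_smul, oY, jop_e, smul_smul, kap, kap,
      Finset.prod_range_succ]
    congr 1
    · push_cast; ring
    · congr 1; push_cast; ring

theorem Z_aeval (f : Polynomial k) (a b : ℤ) (c d : ℕ) :
    (Polynomial.aeval (oZ k) f) (je k a b c d) = f.eval (a : k) • je k a b c d := by
  induction f using Polynomial.induction_on' with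
  | add p q hp hq => simp [hp, hq, add_smul]
  | monomial n r =>
    rw [Polynomial.aeval_monomial, Polynomial.eval_monomial, Module.End.mul_apply]
    have : (oZ k ^ n) (je k a b c d) = (a : k) ^ n • je k a b c d := by
      induction n with
      | zero => simp
      | succ n ih =>
        rw [pow_succ', Module.End.mul_apply, ih, map_smul, oZ, jop_e, smul_smul, pow_succ]
    rw [this, map_smul, Module.algebraMap_end_apply, smul_smul, mul_comm]

theorem jm_lead (i : JI) (f : Polynomial k) (a b : ℤ) : ∃ w : JB k,
    jphi k (jm k i f) (je k a b 0 0) = (f.eval (a : k) * kap k i.j (a + 2 * b)) • w ∧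
    Ld k w (a + i.j - i.l - i.b + i.a) (b + i.c) i.b i.l := by
  refine ⟨(oX k ^ i.a) ((oU k ^ i.b) ((jphi k ((gU k ^ i.c : (D k)ˣ) : D k))
    ((oV k ^ i.l) (je k (a + i.j) b 0 0)))), ?_, ?_⟩
  · simp only [jm, map_mul, map_pow, phiX, phiU, phiV, phiY, Module.End.mul_apply]
    rw [← Polynomial.aeval_algHom_apply, phiZ, Z_aeval]
    simp only [map_smul, Y_pow, smul_smul]
  · have h0 : Ld k (je k (a + i.j) b 0 0) (a + i.j) b 0 0 := by simp [Ld]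
    have h1 := Ld_iter k _ _ _ _ (LdV k) i.l h0
    have h2 := Ld_step k (jphi k ((gU k ^ i.c : (D k)ˣ) : D k)) 0 i.c 0 0 (by
      intro a b c d
      rw [phi_gz]
      simp [Ld]) h1
    have h3 := Ld_iter k _ _ _ _ (LdU k) i.b h2
    have h4 := Ld_iter k _ _ _ _ (LdX k) i.a h3
    convert h4 using 1 <;> ring

theorem kap_zero {j j0 : ℕ} (h : j0 < j) : kap k j (-(j0 : k)) = 0 := by
  refine Finset.prod_eq_zero (Finset.mem_range.2 h) ?_
  simp

theorem kap_ne (j0 : ℕ) : kap k j0 (-(j0 : k)) ≠ 0 := by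
  refine Finset.prod_ne_zero_iff.2 fun t ht => ?_
  have := Finset.mem_range.1 ht
  refine mul_ne_zero (by simp) ?_
  intro h
  have : (t : k) = j0 := by linear_combination h
  have := Nat.cast_injective this
  omega

theorem exists_repr (d : D k) : ∃ w : JI →₀ Polynomial k, d = w.sum fun i f => jm k i f := by
  classical
  have h0 : ∀ i, jm k i 0 = 0 := by intro i; simp [jm]
  have hadd : ∀ i f g, jm k i (f + g) = jm k i f + jm k i g := by
    intro i f g; simp [jm, mul_add]
  have := jV_top k d
  induction this using Submodule.span_induction with
  | mem w hw =>
    obtain ⟨i, f, rfl⟩ := hw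
    exact ⟨Finsupp.single i f, by rw [Finsupp.sum_single_index (h0 i)]⟩
  | zero => exact ⟨0, by simp⟩
  | add x y _ _ hx hy =>
    obtain ⟨w, rfl⟩ := hx
    obtain ⟨w', rfl⟩ := hy
    exact ⟨w + w', by rw [Finsupp.sum_add_index' h0 hadd]⟩
  | smul r x _ hx =>
    obtain ⟨w, rfl⟩ := hx
    refine ⟨r • w, ?_⟩
    rw [Finsupp.sum_smul_index' h0, Finsupp.smul_sum]
    refine Finsupp.sum_congr fun i _ => ?_
    simp [jm]

theorem jphi_inj (d : D k) (h : jphi k d = 0) : d = 0 := by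
  classical
  obtain ⟨w, rfl⟩ := exists_repr k d
  by_cases hw : w = 0
  · simp [hw]
  exfalso
  have hne : w.support.Nonempty := Finsupp.support_nonempty_iff.2 hw
  obtain ⟨i1, hi1, hmax1⟩ := Finset.exists_max_image w.support (fun i => 2 * i.l + i.b) hne
  obtain ⟨i0, hi0, hmin⟩ := Finset.exists_min_image
    (w.support.filter fun i => 2 * i.l + i.b = 2 * i1.l + i1.b) (fun i => i.j) ⟨i1, by simp [hi1]⟩
  rw [Finset.mem_filter] at hi0
  obtain ⟨hi0, hr⟩ := hi0
  have hmax : ∀ i ∈ w.support, 2 * i.l + i.b ≤ 2 * i0.l + i0.b := by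
    intro i hi; rw [hr]; exact hmax1 i hi
  have hmin' : ∀ i ∈ w.support, 2 * i.l + i.b = 2 * i0.l + i0.b → i0.j ≤ i.j := by
    intro i hi h; exact hmin i (by simp [Finset.mem_filter, h, hr, Finsupp.mem_support_iff.1 hi])
  have key : ∀ b : ℤ, (w i0).eval ((-(i0.j : ℤ) - 2 * b : ℤ) : k) = 0 := by
    intro b
    set a : ℤ := -(i0.j : ℤ) - 2 * b with ha
    have hab : (a : k) + 2 * b = -(i0.j : k) := by rw [ha]; push_cast; ring
    have h1 := congrArg (fun T : Module.End k (JB k) => T (je k a b 0 0)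
      (a + i0.j - i0.l - i0.b + i0.a, b + i0.c, i0.b, i0.l)) h
    simp only [Finsupp.sum, map_sum, LinearMap.sum_apply, Finsupp.finsetSum_apply,
      LinearMap.zero_apply, Finsupp.zero_apply] at h1
    rw [Finset.sum_eq_single_of_mem i0 hi0] at h1
    · obtain ⟨v, hv1, hv2⟩ := jm_lead k i0 (w i0) a b
      rw [hv1, Finsupp.smul_apply] at h1
      have h2 := jL_coeff k hv2 (a + i0.j - i0.l - i0.b + i0.a) (b + i0.c) i0.b i0.l le_rfl
      rw [Finsupp.sub_apply, je, Finsupp.single_eq_same, sub_eq_zero] at h2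
      rw [h2, hab, smul_eq_mul, mul_one] at h1
      exact (mul_eq_zero.1 h1).resolve_right (kap_ne k _)
    · intro i hi hne
      obtain ⟨v, hv1, hv2⟩ := jm_lead k i (w i) a b
      rw [hv1, Finsupp.smul_apply]
      have hc := jL_coeff k hv2 (a + i0.j - i0.l - i0.b + i0.a) (b + i0.c) i0.b i0.l (hmax i hi)
      rw [Finsupp.sub_apply, sub_eq_zero] at hc
      by_cases hj : i0.j < i.j
      · rw [hab, kap_zero k hj]; simp
      · rw [hc, je, Finsupp.single_apply, if_neg, smul_zero]
        intro heq
        simp only [Prod.mk.injEq] at heq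
        obtain ⟨e1, e2, e3, e4⟩ := heq
        have := hmin' i hi (by omega)
        apply hne
        cases i; cases i0
        simp only [JI.mk.injEq] at *
        omega
  have hz : w i0 = 0 := by
    refine Polynomial.eq_zero_of_infinite_isRoot _ ?_
    refine Set.infinite_of_injective_forall_mem (f := fun b : ℤ => ((-(i0.j : ℤ) - 2 * b : ℤ) : k)) ?_ key
    intro b b' hb
    have := Int.cast_injective hb
    omega
  exact Finsupp.mem_support_iff.1 hi0 hz

noncomputable def jq : D k := DU k * DX k + 2 + 2 * DG k
noncomputable def js : D k := DX k * DV k + DU k * DY k +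
      (-((1/2 : k) • (DU k * DX k)) + DG k - 1) * DZ k - 2 * (1 + DG k)
noncomputable def jz : D k := jq k ^ 2 * DGinv k
noncomputable def jw : D k := jq k * DGinv k * js k
noncomputable def jt : D k := js k ^ 2 * DGinv k

noncomputable def sh (m : ℤ) (p r : ℕ) : Module.End k (JB k) :=
  jop k fun a b c d => je k a (b + m) (c + p) (d + r)

theorem sh_mul (m m' : ℤ) (p r p' r' : ℕ) :
    sh k m p r * sh k m' p' r' = sh k (m + m') (p + p') (r + r') := by
  refine jext k fun a b c d => ?_
  simp only [Module.End.mul_apply, sh, jop_e]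
  congr 1 <;> ring

theorem sh_pow (m : ℤ) (p r n : ℕ) : sh k m p r ^ n = sh k (n * m) (n * p) (n * r) := by
  induction n with
  | zero =>
    refine jext k fun a b c d => ?_
    simp [sh, jop_e]
  | succ n ih =>
    rw [pow_succ, ih, sh_mul]
    congr 1 <;> push_cast <;> ring

theorem phi_two : jphi k 2 = (2 : k) • 1 := by
  have : (2 : D k) = (2 : k) • 1 := by
    rw [ofNat_smul_eq_nsmul, two_nsmul, one_add_one_eq_two]
  rw [this, map_smul, map_one]

theorem phi_q : jphi k (jq k) = sh k 0 1 0 := by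
  refine jext k fun a b c d => ?_
  simp only [jq, map_mul, map_add, phi_two, phiU, phiX, phiG, Module.End.mul_apply,
    LinearMap.add_apply, LinearMap.smul_apply, Module.End.one_apply, oX, oG, oU, sh, jop_e,
    add_sub_cancel_right, add_zero]
  module

theorem phi_s : jphi k (js k) = sh k 0 0 1 := by
  refine jext k fun a b c d => ?_
  simp only [js, map_mul, map_add, map_sub, map_neg, map_smul, map_one, phi_two, phiU, phiX, phiG,
    phiV, phiY, phiZ, Module.End.mul_apply,
    LinearMap.add_apply, LinearMap.sub_apply, LinearMap.neg_apply, LinearMap.smul_apply,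
    Module.End.one_apply, oX, oG, oU, oV, oY, oZ, sh, jop_e,
    add_sub_cancel_right, sub_add_cancel, add_zero]
  module

theorem phi_gi : jphi k (DGinv k) = sh k (-1) 0 0 := by
  rw [phiGi]; rfl

theorem phi_z : jphi k (jz k) = sh k (-1) 2 0 := by
  rw [jz, map_mul, map_pow, phi_q, phi_gi, sh_pow, sh_mul]; rfl
theorem phi_w : jphi k (jw k) = sh k (-1) 1 1 := by
  rw [jw, map_mul, map_mul, phi_q, phi_gi, phi_s, sh_mul, sh_mul]; rfl
theorem phi_t : jphi k (jt k) = sh k (-1) 0 2 := by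
  rw [jt, map_mul, map_pow, phi_s, phi_gi, sh_pow, sh_mul]; rfl

theorem phi_eq {x y : D k} (h : jphi k x = jphi k y) : x = y := by
  rw [← sub_eq_zero]
  apply jphi_inj
  rw [map_sub, h, sub_self]

theorem sh_comm (m : ℤ) (p r : ℕ) (h : 2 * m + p + r = 0) (i : JGen) :
    ogen k i * sh k m p r = sh k m p r * ogen k i := by
  have hk : (2 * m + p + r : k) = 0 := by exact_mod_cast congrArg (Int.cast : ℤ → k) h
  have hk' : (r : k) = - (2 * m + p) := by linear_combination hk
  refine jext k fun a b c d => ?_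
  cases i <;>
  simp only [ogen, Module.End.mul_apply, oX, oG, oGi, oZ, oU, oY, oV, sh, jop_e, map_add, map_sub,
    map_smul, add_right_comm b m 1, add_right_comm c p 1, add_right_comm d r 1,
    add_sub_right_comm b m 1] <;> push_cast <;> rw [hk'] <;> module

theorem mem_center {t : D k} {m : ℤ} {p r : ℕ} (ht : jphi k t = sh k m p r)
    (h : 2 * m + p + r = 0) : t ∈ Subalgebra.center k (D k) := by
  have hc : ∀ i, Dmk k (ι k i) * t = t * Dmk k (ι k i) := by
    intro i
    apply phi_eq
    rw [map_mul, map_mul, ht, jphi_mk, FreeAlgebra.lift_ι_apply]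
    exact sh_comm k m p r h i
  rw [Subalgebra.mem_center_iff]
  have step : ∀ i w, w * t = t * w → Dmk k (ι k i) * w * t = t * (Dmk k (ι k i) * w) := by
    intro i w hw
    rw [mul_assoc, hw, ← mul_assoc, hc, mul_assoc]
  let V : Submodule k (D k) :=
    { carrier := {w | w * t = t * w}
      add_mem' := by
        intro a b ha hb
        simp only [Set.mem_ofPred_eq] at *
        rw [add_mul, mul_add, ha, hb]
      zero_mem' := by simp
      smul_mem' := by
        intro r a ha
        simp only [Set.mem_ofPred_eq] at *
        rw [smul_mul_assoc, mul_smul_comm, ha] }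
  intro d
  exact D_top k V (by simp [V]) (step _) (step _) (step _) (step _) (step _) (step _) (step _) d

theorem jz_mem : jz k ∈ Subalgebra.center k (D k) := mem_center k (phi_z k) (by norm_num)
theorem jw_mem : jw k ∈ Subalgebra.center k (D k) := mem_center k (phi_w k) (by norm_num)
theorem jt_mem : jt k ∈ Subalgebra.center k (D k) := mem_center k (phi_t k) (by norm_num)

theorem center_zero {d : D k} (hd : d ∈ Subalgebra.center k (D k))
    (h : jphi k d (je k 0 0 0 0) = 0) : d = 0 := by
  rw [Subalgebra.mem_center_iff] at hd
  have hcomm : ∀ (t : D k) (w : JB k), jphi k d (jphi k t w) = jphi k t (jphi k d w) := by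
    intro t w
    rw [← Module.End.mul_apply, ← Module.End.mul_apply, ← map_mul, ← map_mul, hd]
  apply jphi_inj
  refine jext k fun a b c e => ?_
  have h0 : ∀ a : ℤ, jphi k d (je k a 0 0 0) = 0 := by
    intro a
    have hXp : ∀ (n : ℕ) (a : ℤ), jphi k (DX k ^ n) (je k a 0 0 0) = je k (a + n) 0 0 0 := by
      intro n a
      rw [map_pow, phiX]
      induction n with
      | zero => simp
      | succ n ih =>
        rw [pow_succ', Module.End.mul_apply, ih, oX, jop_e]; congr 1; push_cast; ring
    have hXi : ∀ (n : ℕ) (w : JB k), jphi k (DX k ^ n) w = 0 → w = 0 := by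
      intro n w hw
      rw [map_pow, phiX] at hw
      let T : Module.End k (JB k) := jop k fun a b c d => je k (a-1) b c d
      have hT : T * oX k = 1 := by
        refine jext k fun a b c d => ?_
        simp [T, oX, jop_e]
      have hT' : T ^ n * oX k ^ n = 1 := by
        induction n with
        | zero => simp
        | succ n ih =>
          have h1 : T ^ n * oX k ^ n = 1 := by
            clear hw ih
            induction n with
            | zero => simp
            | succ n ih =>
              rw [pow_succ, pow_succ', mul_assoc, ← mul_assoc T, hT, one_mul, ih]
          rw [pow_succ, pow_succ', mul_assoc, ← mul_assoc T, hT, one_mul, h1]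
      have := congrArg (fun S : Module.End k (JB k) => S w) hT'
      simpa [Module.End.mul_apply, hw] using this.symm
    obtain ⟨n, rfl | rfl⟩ := a.eq_nat_or_neg
    · have := hXp n 0
      rw [zero_add] at this
      rw [← this, hcomm, h, map_zero]
    · apply hXi n
      rw [← hcomm, hXp, neg_add_cancel, h]
  have h1 : je k a b c e = jphi k (((gU k ^ b : (D k)ˣ) : D k) * (jq k ^ c * js k ^ e)) (je k a 0 0 0) := by
    simp only [map_mul, map_pow, phi_q, phi_s, sh_pow, sh_mul, Module.End.mul_apply]
    rw [sh, jop_e, phi_gz]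
    simp
  rw [h1, hcomm, h0, map_zero, LinearMap.zero_apply]

noncomputable def jmon (c d : ℕ) : D k := jz k ^ (c / 2) * jw k ^ (c % 2) * jt k ^ (d / 2)

theorem phi_mon (c d : ℕ) (b : ℤ) (h : 2 * b + c + d = 0) :
    jphi k (jmon k c d) (je k 0 0 0 0) = je k 0 b c d := by
  simp only [jmon, map_mul, map_pow, phi_z, phi_w, phi_t, sh_pow, sh_mul]
  rw [sh, jop_e]
  congr 1 <;> push_cast <;> omega

theorem jadj_le : Algebra.adjoin k {jz k, jw k, jt k} ≤ Subalgebra.center k (D k) := by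
  rw [Algebra.adjoin_le_iff]
  rintro x (rfl | rfl | rfl)
  · exact jz_mem k
  · exact jw_mem k
  · exact jt_mem k

theorem jmon_mem (c d : ℕ) : jmon k c d ∈ Algebra.adjoin k {jz k, jw k, jt k} := by
  have h1 : jz k ∈ Algebra.adjoin k {jz k, jw k, jt k} := Algebra.subset_adjoin (by simp)
  have h2 : jw k ∈ Algebra.adjoin k {jz k, jw k, jt k} := Algebra.subset_adjoin (by simp)
  have h3 : jt k ∈ Algebra.adjoin k {jz k, jw k, jt k} := Algebra.subset_adjoin (by simp)
  exact mul_mem (mul_mem (pow_mem h1 _) (pow_mem h2 _)) (pow_mem h3 _)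

theorem oZ_coeff (w : JB k) (a b : ℤ) (c d : ℕ) : oZ k w (a, b, c, d) = a * w (a, b, c, d) := by
  classical
  have : (Finsupp.lapply (a, b, c, d) : JB k →ₗ[k] k) ∘ₗ oZ k =
      (a : k) • (Finsupp.lapply (a, b, c, d) : JB k →ₗ[k] k) := by
    refine jext k fun a' b' c' d' => ?_
    rw [LinearMap.comp_apply, oZ, jop_e, LinearMap.smul_apply, map_smul]
    simp only [Finsupp.lapply_apply, je, Finsupp.single_apply, Prod.mk.injEq]
    split_ifs with h
    · rw [h.1]
    · simp
  exact congrArg (fun f : JB k →ₗ[k] k => f w) this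

theorem oY_coeff (w : JB k) (a b : ℤ) (c d : ℕ) :
    oY k w (a + 1, b, c, d) = (-(1/2 : k) * (a + 2 * b + c + d)) * w (a, b, c, d) := by
  classical
  have : (Finsupp.lapply (a + 1, b, c, d) : JB k →ₗ[k] k) ∘ₗ oY k =
      (-(1/2 : k) * (a + 2 * b + c + d)) • (Finsupp.lapply (a, b, c, d) : JB k →ₗ[k] k) := by
    refine jext k fun a' b' c' d' => ?_
    rw [LinearMap.comp_apply, oY, jop_e, LinearMap.smul_apply, map_smul]
    simp only [Finsupp.lapply_apply, je, Finsupp.single_apply, Prod.mk.injEq, add_left_inj]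
    split_ifs with h
    · obtain ⟨rfl, rfl, rfl, rfl⟩ := h; rfl
    · simp
  exact congrArg (fun f : JB k →ₗ[k] k => f w) this

theorem center_eq : Subalgebra.center k (D k) = Algebra.adjoin k {jz k, jw k, jt k} := by
  refine le_antisymm ?_ (jadj_le k)
  intro t ht
  set p := jphi k t (je k 0 0 0 0) with hp
  have hcomm : ∀ (x : D k) (w : JB k), jphi k t (jphi k x w) = jphi k x (jphi k t w) := by
    intro x w
    rw [Subalgebra.mem_center_iff] at ht
    rw [← Module.End.mul_apply, ← Module.End.mul_apply, ← map_mul, ← map_mul, ht]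
  have hz : oZ k p = 0 := by
    rw [← phiZ, hp, ← hcomm, phiZ, oZ, jop_e]; simp
  have hy : oY k p = 0 := by
    rw [← phiY, hp, ← hcomm, phiY, oY, jop_e]; simp
  let t' : D k := p.sum fun i r => r • jmon k i.2.2.1 i.2.2.2
  have ht' : t' ∈ Algebra.adjoin k {jz k, jw k, jt k} :=
    sum_mem fun i _ => Subalgebra.smul_mem _ (jmon_mem k _ _) _
  have h0 : t - t' = 0 := by
    refine center_zero k (sub_mem ht (jadj_le k ht')) ?_
    rw [map_sub, LinearMap.sub_apply, ← hp, sub_eq_zero]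
    simp only [t', Finsupp.sum, map_sum, LinearMap.sum_apply, map_smul, LinearMap.smul_apply]
    conv_lhs => rw [← Finsupp.sum_single p]
    refine Finset.sum_congr rfl ?_
    rintro ⟨a, b, c, d⟩ hi
    have hne := Finsupp.mem_support_iff.1 hi
    have h1 := oZ_coeff k p a b c d
    have h2 := oY_coeff k p a b c d
    rw [hz, Finsupp.zero_apply, eq_comm, mul_eq_zero, or_iff_left hne] at h1
    rw [hy, Finsupp.zero_apply, eq_comm, mul_eq_zero, or_iff_left hne] at h2
    have ha : a = 0 := by exact_mod_cast h1
    have h3 := (mul_eq_zero.1 h2).resolve_left (by simp)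
    have h4 : a + 2 * b + c + d = 0 := by exact_mod_cast h3
    subst ha
    rw [phi_mon k c d b (by omega), je, Finsupp.smul_single, smul_eq_mul, mul_one]
  rw [sub_eq_zero.1 h0]
  exact ht'

open MvPolynomial in
theorem center_iso : Nonempty
      ((MvPolynomial (Fin 3) k ⧸
          Ideal.span {(X 0 : MvPolynomial (Fin 3) k) * X 2 - X 1 ^ 2}) ≃ₐ[k]
        Subalgebra.center k (D k)) := by
  set I := Ideal.span {(X 0 : MvPolynomial (Fin 3) k) * X 2 - X 1 ^ 2} with hI
  let gens : Fin 3 → Subalgebra.center k (D k) := ![⟨jz k, jz_mem k⟩, ⟨jw k, jw_mem k⟩, ⟨jt k, jt_mem k⟩]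
  let F : MvPolynomial (Fin 3) k →ₐ[k] Subalgebra.center k (D k) := aeval gens
  have hF : ∀ a ∈ I, F a = 0 := by
    intro a ha
    have : I ≤ RingHom.ker F := by
      rw [hI, Ideal.span_singleton_le_iff_mem, RingHom.mem_ker]
      simp only [F, map_sub, map_mul, map_pow, aeval_X]
      rw [sub_eq_zero]
      apply Subtype.ext
      apply phi_eq
      change jphi k (jz k * jt k) = jphi k (jw k ^ 2)
      rw [map_mul, map_pow, phi_z, phi_w, phi_t, sh_pow, sh_mul]
      rfl
    exact this ha
  let Fq := Ideal.Quotient.liftₐ I F hF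
  let rho : JB k →ₗ[k] (MvPolynomial (Fin 3) k ⧸ I) :=
    Finsupp.linearCombination k (fun i : JIdx => Ideal.Quotient.mk I
      (X 0 ^ (i.2.2.1 / 2) * X 1 ^ (i.2.2.1 % 2) * X 2 ^ (i.2.2.2 / 2)))
  let ev : MvPolynomial (Fin 3) k →ₗ[k] JB k :=
    (LinearMap.applyₗ (je k 0 0 0 0)).comp ((jphi k).toLinearMap.comp
      ((Subalgebra.center k (D k)).val.toLinearMap.comp F.toLinearMap))
  have hrel : Ideal.Quotient.mk I (X 1) ^ 2 = Ideal.Quotient.mk I (X 0) * Ideal.Quotient.mk I (X 2) := by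
    rw [← map_pow, ← map_mul, eq_comm, Ideal.Quotient.eq]
    exact Ideal.subset_span rfl
  have hrho : rho.comp ev = (Ideal.Quotient.mkₐ k I).toLinearMap := by
    refine MvPolynomial.linearMap_ext fun s => LinearMap.ext_ring ?_
    have h1 : (monomial s (1:k)) = X 0 ^ s 0 * X 1 ^ s 1 * X 2 ^ s 2 := by
      rw [monomial_eq, Finsupp.prod_fintype _ _ (by simp), Fin.prod_univ_three]; simp
    have h2 : ev (monomial s 1) = je k 0 (-(s 0 + s 1 + s 2)) (2 * s 0 + s 1) (s 1 + 2 * s 2) := by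
      change jphi k (F (monomial s 1) : D k) (je k 0 0 0 0) = _
      rw [h1]
      simp only [F, map_mul, map_pow, aeval_X]
      change jphi k (jz k ^ s 0 * jw k ^ s 1 * jt k ^ s 2) (je k 0 0 0 0) = _
      simp only [map_mul, map_pow, phi_z, phi_w, phi_t, sh_pow, sh_mul]
      rw [sh, jop_e]
      congr 1 <;> push_cast <;> ring
    change rho (ev (monomial s 1)) = Ideal.Quotient.mk I (monomial s 1)
    rw [h2, je, h1]
    simp only [rho, Finsupp.linearCombination_single, one_smul]
    obtain ⟨n, hn | hn⟩ := Nat.even_or_odd' (s 1)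
    · have e1 : (2 * s 0 + s 1) / 2 = s 0 + n := by omega
      have e2 : (2 * s 0 + s 1) % 2 = 0 := by omega
      have e3 : (s 1 + 2 * s 2) / 2 = s 2 + n := by omega
      rw [e1, e2, e3, hn]
      simp only [map_mul, map_pow, pow_mul, hrel]
      ring
    · have e1 : (2 * s 0 + s 1) / 2 = s 0 + n := by omega
      have e2 : (2 * s 0 + s 1) % 2 = 1 := by omega
      have e3 : (s 1 + 2 * s 2) / 2 = s 2 + n := by omega
      rw [e1, e2, e3, hn]
      simp only [map_mul, map_pow, pow_mul, pow_succ _ (2 * n), hrel]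
      ring
  refine ⟨AlgEquiv.ofBijective Fq ⟨?_, ?_⟩⟩
  · rw [injective_iff_map_eq_zero]
    intro a ha
    obtain ⟨f, rfl⟩ := Ideal.Quotient.mk_surjective a
    have h1 : F f = 0 := ha
    have h2 := congrArg (fun T : MvPolynomial (Fin 3) k →ₗ[k] (MvPolynomial (Fin 3) k ⧸ I) => T f) hrho
    have h3 : ev f = 0 := by
      change jphi k (F f : D k) (je k 0 0 0 0) = _
      rw [h1]; simp
    change rho (ev f) = Ideal.Quotient.mk I f at h2
    rw [← h2, h3, map_zero]
  · rintro ⟨t, ht⟩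
    have ht2 : t ∈ (F.range).map (Subalgebra.center k (D k)).val := by
      have hle : Algebra.adjoin k {jz k, jw k, jt k} ≤ (F.range).map (Subalgebra.center k (D k)).val := by
        rw [Algebra.adjoin_le_iff]
        rintro x (rfl | rfl | rfl)
        · exact ⟨gens 0, ⟨X 0, by simp [F]⟩, rfl⟩
        · exact ⟨gens 1, ⟨X 1, by simp [F]⟩, rfl⟩
        · exact ⟨gens 2, ⟨X 2, by simp [F]⟩, rfl⟩
      apply hle
      rw [← center_eq]
      exact ht
    obtain ⟨_, ⟨f, rfl⟩, hf⟩ := ht2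
    exact ⟨Ideal.Quotient.mk I f, Subtype.ext hf⟩

set_option synthInstance.maxHeartbeats 1000000
set_option maxHeartbeats 2000000

open MvPolynomial in
/-- with `q = ux + 2 + 2g`, `z = q²g⁻¹`, `s = xv + uy + (−(1/2)ux + g − 1)ζ −
2(1+g)`, `ω = qg⁻¹s` and `θ = s²g⁻¹`, the center of `D` is the `k`-subalgebra generated by
`z`, `ω`, `θ`, and it is isomorphic as a `k`-algebra to `k[X,Y,Z]/(XZ − Y²)`. -/
theorem center_of_D :
    letI q : D k := DU k * DX k + 2 + 2 * DG k
    letI z : D k := q ^ 2 * DGinv k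
    letI s : D k := DX k * DV k + DU k * DY k +
      (-((1/2 : k) • (DU k * DX k)) + DG k - 1) * DZ k - 2 * (1 + DG k)
    letI ω : D k := q * DGinv k * s
    letI θ : D k := s ^ 2 * DGinv k
    Subalgebra.center k (D k) = Algebra.adjoin k {z, ω, θ} ∧
    Nonempty
      ((MvPolynomial (Fin 3) k ⧸
          Ideal.span {(X 0 : MvPolynomial (Fin 3) k) * X 2 - X 1 ^ 2}) ≃ₐ[k]
        Subalgebra.center k (D k)) := by
  exact ⟨center_eq k, center_iso k⟩
end

section
/- The algebra D is a domain (it has no zero divisors) and is both left and right noetherian. -/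
open FreeAlgebra

variable (k : Type) [Field k] [IsAlgClosed k] [CharZero k]

section
set_option linter.all false
set_option linter.unusedSimpArgs false
set_option linter.unnecessarySeqFocus false

namespace OreAux

/-- left filtration by degree in `t` -/
def Fil {R S : Type} [Ring R] [Ring S] (i : R →+* S) (t : S) : ℕ → S → Prop
  | 0, s => s = 0
  | n + 1, s => ∃ r, Fil i t n (s - i r * t ^ n)

section
variable {R S : Type} [Ring R] [Ring S] {i : R →+* S} {t : S}

theorem Fil.zero : ∀ n, Fil i t n 0
  | 0 => rfl
  | n + 1 => ⟨0, by simpa using Fil.zero n⟩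

theorem Fil.add : ∀ {n} {a b : S}, Fil i t n a → Fil i t n b → Fil i t n (a + b)
  | 0, a, b, ha, hb => by
    simp only [Fil] at *; simp [ha, hb]
  | n + 1, a, b, ⟨r, hr⟩, ⟨r', hr'⟩ => ⟨r + r', by
      have := Fil.add hr hr'
      rwa [show a - i r * t ^ n + (b - i r' * t ^ n) = a + b - i (r + r') * t ^ n by
        rw [map_add]; noncomm_ring] at this⟩

theorem Fil.lmul (c : R) : ∀ {n} {a : S}, Fil i t n a → Fil i t n (i c * a)
  | 0, a, ha => by simp only [Fil] at *; simp [ha]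
  | n + 1, a, ⟨r, hr⟩ => ⟨c * r, by
      have := Fil.lmul c hr
      rwa [mul_sub, ← mul_assoc, ← map_mul] at this⟩

theorem Fil.neg {n} {a : S} (h : Fil i t n a) : Fil i t n (-a) := by
  have := Fil.lmul (-1) h
  simpa using this

theorem Fil.sub {n} {a b : S} (ha : Fil i t n a) (hb : Fil i t n b) : Fil i t n (a - b) := by
  rw [sub_eq_add_neg]; exact ha.add hb.neg

theorem Fil.succ {n} {a : S} (h : Fil i t n a) : Fil i t (n + 1) a := ⟨0, by simpa using h⟩

theorem Fil.mono {n m} (hnm : n ≤ m) {a : S} (h : Fil i t n a) : Fil i t m a := by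
  induction hnm with
  | refl => exact h
  | step _ ih => exact ih.succ

theorem Fil.term (n : ℕ) (r : R) : Fil i t (n + 1) (i r * t ^ n) :=
  ⟨r, by simpa using Fil.zero n⟩

variable {σ : R →+* R} {δ : R → R} (hc : ∀ r, t * i r = i (σ r) * t + i (δ r))
include hc

theorem Fil.tmul : ∀ {n} {a : S}, Fil i t n a → Fil i t (n + 1) (t * a)
  | 0, a, ha => by
    simp only [Fil] at ha; rw [ha, mul_zero]; exact Fil.zero _
  | n + 1, a, ⟨r, hr⟩ => ⟨σ r, by
      have h1 := (Fil.tmul hr).add (Fil.term (i := i) (t := t) n (δ r))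
      have h2 : t * (i r * t ^ n) = i (σ r) * t ^ (n + 1) + i (δ r) * t ^ n := by
        rw [← mul_assoc, hc, add_mul, mul_assoc, ← pow_succ']
      have h3 : t * (a - i r * t ^ n) + i (δ r) * t ^ n = t * a - i (σ r) * t ^ (n + 1) := by
        rw [mul_sub, h2]; abel
      rwa [h3] at h1⟩

theorem Fil.tpow_mul (m : ℕ) {n} {a : S} (h : Fil i t n a) : Fil i t (n + m) (t ^ m * a) := by
  induction m with
  | zero => simpa using h
  | succ m ih =>
    have := Fil.tmul hc ih
    rwa [← mul_assoc, ← pow_succ'] at this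

theorem Fil.mul : ∀ {n m} {a b : S}, Fil i t n a → Fil i t (m + 1) b → Fil i t (n + m) (a * b)
  | 0, m, a, b, ha, hb => by
    simp only [Fil] at ha; rw [ha, zero_mul]; exact Fil.zero _
  | n + 1, m, a, b, ⟨r, hr⟩, hb => by
    have h1 := (Fil.mul hr hb).succ
    have h2 := (Fil.tpow_mul hc n hb).lmul r
    have h3 : Fil i t (n + 1 + m) ((a - i r * t ^ n) * b + i r * (t ^ n * b)) :=
      (h1.mono (by omega)).add (h2.mono (by omega))
    rwa [show (a - i r * t ^ n) * b + i r * (t ^ n * b) = a * b by noncomm_ring] at h3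

theorem Fil.lead_t {n} {a : S} {r : R} (h : Fil i t n (a - i r * t ^ n)) :
    Fil i t (n + 1) (t * a - i (σ r) * t ^ (n + 1)) := by
  have h1 := (Fil.tmul hc h).add (Fil.term (i := i) (t := t) n (δ r))
  have h2 : t * (i r * t ^ n) = i (σ r) * t ^ (n + 1) + i (δ r) * t ^ n := by
    rw [← mul_assoc, hc, add_mul, mul_assoc, ← pow_succ']
  have h3 : t * (a - i r * t ^ n) + i (δ r) * t ^ n = t * a - i (σ r) * t ^ (n + 1) := by
    rw [mul_sub, h2]; abel
  rwa [h3] at h1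

theorem Fil.lead_tpow (m : ℕ) {n} {a : S} {r : R} (h : Fil i t n (a - i r * t ^ n)) :
    Fil i t (n + m) (t ^ m * a - i (σ^[m] r) * t ^ (n + m)) := by
  induction m with
  | zero => simpa using h
  | succ m ih =>
    have := Fil.lead_t hc ih
    rwa [← mul_assoc, ← pow_succ', ← Function.iterate_succ_apply' (f := σ)] at this

theorem Fil.lead_mul {n m} {a b : S} {r r' : R} (h : Fil i t n (a - i r * t ^ n))
    (h' : Fil i t m (b - i r' * t ^ m)) :
    Fil i t (m + n) (a * b - i (r * σ^[n] r') * t ^ (m + n)) := by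
  have h1 := Fil.mul hc h (⟨r', h'⟩ : Fil i t (m + 1) b)
  have h2 := (Fil.lead_tpow hc n h').lmul r
  have h3 := (h1.mono (show n + m ≤ m + n by omega)).add h2
  rwa [show (a - i r * t ^ n) * b + i r * (t ^ n * b - i (σ^[n] r') * t ^ (m + n)) =
    a * b - i (r * σ^[n] r') * t ^ (m + n) by rw [map_mul]; noncomm_ring] at h3

omit hc in
theorem Fil.exists_lead : ∀ {n} {a : S}, Fil i t n a → a ≠ 0 →
    ∃ m r, r ≠ 0 ∧ Fil i t m (a - i r * t ^ m)
  | 0, a, h, h0 => absurd h h0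
  | n + 1, a, ⟨r, hr⟩, h0 => by
    by_cases h : r = 0
    · subst h
      exact Fil.exists_lead (by simpa using hr) h0
    · exact ⟨n, r, h, hr⟩

theorem isDomain_of [IsDomain R] (hσ : Function.Injective σ)
    (hspan : ∀ s, ∃ n, Fil i t n s)
    (hind : ∀ n r, Fil i t n (i r * t ^ n) → r = 0) : IsDomain S := by
  have : Nontrivial S := ⟨1, 0, fun h => one_ne_zero (α := R) (hind 0 1 (by simp [Fil, h]))⟩
  have : NoZeroDivisors S := ⟨by
    intro a b hab
    by_contra! hne
    obtain ⟨n, hn⟩ := hspan a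
    obtain ⟨m, hm⟩ := hspan b
    obtain ⟨n, r, hr, h⟩ := hn.exists_lead hne.1
    obtain ⟨m, r', hr', h'⟩ := hm.exists_lead hne.2
    have h1 := Fil.lead_mul hc h h'
    rw [hab, zero_sub] at h1
    have h2 := hind _ _ (by have := h1.neg; rwa [neg_neg] at this)
    rcases mul_eq_zero.1 h2 with h3 | h3
    · exact hr h3
    · apply hr'
      exact hσ.iterate n (by rw [h3, iterate_map_zero])⟩
  exact NoZeroDivisors.to_isDomain S

omit hc in
/-- ideal of (twisted) leading coefficients -/
def Lead (i : R →+* S) (t : S) (σ : R →+* R) (I : Ideal S) (n : ℕ) : Ideal R where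
  carrier := {r | ∃ s ∈ I, Fil i t n (s - i (σ^[n] r) * t ^ n)}
  zero_mem' := ⟨0, I.zero_mem, by simpa [iterate_map_zero] using Fil.zero n⟩
  add_mem' := by
    rintro a b ⟨s, hs, h⟩ ⟨s', hs', h'⟩
    refine ⟨s + s', I.add_mem hs hs', ?_⟩
    have := h.add h'
    rwa [show s - i (σ^[n] a) * t ^ n + (s' - i (σ^[n] b) * t ^ n) =
      s + s' - i (σ^[n] (a + b)) * t ^ n by rw [iterate_map_add, map_add]; noncomm_ring] at this
  smul_mem' := by
    rintro c a ⟨s, hs, h⟩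
    refine ⟨i (σ^[n] c) * s, I.mul_mem_left _ hs, ?_⟩
    have := h.lmul (σ^[n] c)
    rwa [show i (σ^[n] c) * (s - i (σ^[n] a) * t ^ n) =
      i (σ^[n] c) * s - i (σ^[n] (c • a)) * t ^ n by
        rw [smul_eq_mul, iterate_map_mul, map_mul]; noncomm_ring] at this

omit hc in
theorem Lead.mono_left {I J : Ideal S} (h : I ≤ J) (n : ℕ) : Lead i t σ I n ≤ Lead i t σ J n := by
  rintro r ⟨s, hs, h'⟩
  exact ⟨s, h hs, h'⟩

theorem Lead.mono_succ (I : Ideal S) (n : ℕ) : Lead i t σ I n ≤ Lead i t σ I (n + 1) := by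
  rintro r ⟨s, hs, h'⟩
  refine ⟨t * s, I.mul_mem_left _ hs, ?_⟩
  rw [Function.iterate_succ_apply']
  exact Fil.lead_t hc h'

omit hc in
theorem Lead.eq_of (hσ : Function.Surjective σ) (hspan : ∀ s, ∃ n, Fil i t n s)
    {I J : Ideal S} (hIJ : I ≤ J) (h : ∀ n, Lead i t σ I n = Lead i t σ J n) : I = J := by
  refine le_antisymm hIJ fun s hs => ?_
  obtain ⟨n, hn⟩ := hspan s
  induction n generalizing s with
  | zero => rw [show s = 0 from hn]; exact I.zero_mem
  | succ n ih =>
    obtain ⟨r, hr⟩ := hn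
    obtain ⟨r, rfl⟩ := hσ.iterate n r
    have h1 : r ∈ Lead i t σ J n := ⟨s, hs, hr⟩
    rw [← h n] at h1
    obtain ⟨s', hs', hr'⟩ := h1
    have h2 := ih (s - s') (J.sub_mem hs (hIJ hs')) (by
      have := hr.sub hr'
      rwa [sub_sub_sub_cancel_right] at this)
    simpa using I.add_mem h2 hs'

theorem noeth_of [IsNoetherianRing R] (hσ : Function.Surjective σ)
    (hspan : ∀ s, ∃ n, Fil i t n s) : IsNoetherianRing S := by
  rw [IsNoetherianRing, ← monotone_stabilizes_iff_noetherian]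
  intro f
  let L : ℕ → ℕ → Ideal R := fun m n => Lead i t σ (f m) n
  have hL1 : ∀ n, Monotone fun m => L m n := fun n a b hab => Lead.mono_left (f.mono hab) n
  have hL2 : ∀ m, Monotone (L m) := fun m => monotone_nat_of_le_succ fun n =>
    Lead.mono_succ hc _ n
  have stab := (monotone_stabilizes_iff_noetherian (R := R) (M := R)).2 inferInstance
  obtain ⟨N, hN⟩ := stab ⟨fun m => L m m, fun a b hab => (hL1 a hab).trans (hL2 b hab)⟩
  replace hN : ∀ m, N ≤ m → L N N = L m m := hN
  choose M hM using fun n => stab ⟨fun m => L m n, hL1 n⟩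
  replace hM : ∀ n m, M n ≤ m → L (M n) n = L m n := hM
  let B := max N ((Finset.range (N + 1)).sup M)
  have hNB : N ≤ B := le_max_left _ _
  have hMB : ∀ n ≤ N, M n ≤ B := fun n hn =>
    (Finset.le_sup (f := M) (Finset.mem_range.2 (Nat.lt_succ_of_le hn))).trans (le_max_right _ _)
  refine ⟨B, fun m hm => Lead.eq_of (σ := σ) hσ hspan (f.mono hm) fun n => ?_⟩
  change L B n = L m n
  rcases le_total n N with hn | hn
  · rw [← hM n B (hMB n hn), hM n m ((hMB n hn).trans hm)]
  · have key : ∀ b ≥ N, L b n = L N N := fun b hb => by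
      apply le_antisymm
      · rw [hN (max b n) (hb.trans (le_max_left _ _))]
        exact (hL1 n (le_max_left b n)).trans (hL2 _ (le_max_right b n))
      · exact (hL1 N hb).trans (hL2 b hn)
    rw [key B hNB, key m (hNB.trans hm)]

theorem span_of (hgen : ∀ T : Subring S, (∀ r, i r ∈ T) → t ∈ T → T = ⊤) (s : S) :
    ∃ n, Fil i t n s := by
  let T : Subring S :=
    { carrier := {s | ∀ n s', Fil i t n s' → ∃ m, Fil i t m (s * s')}
      zero_mem' := fun n s' h => ⟨0, by simp [Fil]⟩
      one_mem' := fun n s' h => ⟨n, by simpa using h⟩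
      add_mem' := by
        intro a b ha hb n s' h
        obtain ⟨m, hm⟩ := ha n s' h
        obtain ⟨m', hm'⟩ := hb n s' h
        exact ⟨max m m', by
          rw [add_mul]; exact (hm.mono (le_max_left _ _)).add (hm'.mono (le_max_right _ _))⟩
      neg_mem' := by
        intro a ha n s' h
        obtain ⟨m, hm⟩ := ha n s' h
        exact ⟨m, by rw [neg_mul]; exact hm.neg⟩
      mul_mem' := by
        intro a b ha hb n s' h
        obtain ⟨m, hm⟩ := hb n s' h
        obtain ⟨m', hm'⟩ := ha m _ hm
        exact ⟨m', by rwa [mul_assoc]⟩ }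
  have hT : T = ⊤ := hgen T (fun r n s' h => ⟨n, h.lmul r⟩) (fun n s' h => ⟨n + 1, Fil.tmul hc h⟩)
  have hs : s ∈ T := by rw [hT]; trivial
  obtain ⟨m, hm⟩ := hs 1 1 (by simpa using Fil.term (i := i) (t := t) 0 1)
  exact ⟨m, by simpa using hm⟩

end

theorem noeth_op_of {R S : Type} [Ring R] [Ring S] {i : R →+* S} {t : S}
    {σ : R ≃+* R} {δ : R → R} (hc : ∀ r, t * i r = i (σ r) * t + i (δ r))
    [IsNoetherianRing Rᵐᵒᵖ]
    (hgen : ∀ T : Subring S, (∀ r, i r ∈ T) → t ∈ T → T = ⊤) : IsNoetherianRing Sᵐᵒᵖ := by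
  have hc' : ∀ r : Rᵐᵒᵖ, MulOpposite.op t * (RingHom.op i) r =
      (RingHom.op i) ((RingHom.op (σ.symm : R →+* R)) r) * MulOpposite.op t +
      (RingHom.op i) (MulOpposite.op (-δ (σ.symm r.unop))) := by
    intro r
    apply MulOpposite.unop_injective
    have := hc (σ.symm r.unop)
    simp at this ⊢
    rw [this]; abel
  refine noeth_of hc' ?_ (span_of hc' ?_)
  · intro r
    exact ⟨MulOpposite.op (σ r.unop), by simp⟩
  · intro T h1 h2
    have := hgen T.unop (fun r => h1 (MulOpposite.op r)) h2
    exact Subring.unop_injective (by simpa using this)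

end OreAux

namespace OreAux

section
variable {K R : Type} [CommRing K] [Ring R] [Algebra K R]

/-- `V` is the direct sum of copies of `R` indexed by `ℕ` (abstractly). -/
structure IsModel (K R V : Type) [CommRing K] [Ring R] [Algebra K R] [AddCommGroup V] [Module K V]
    (sg : ℕ → R →ₗ[K] V) (cf : ℕ → V →ₗ[K] R) : Prop where
  cf_same : ∀ n c, cf n (sg n c) = c
  cf_ne : ∀ n m c, n ≠ m → cf m (sg n c) = 0
  ext : ∀ (W : Type) [AddCommGroup W] [Module K W] (f g : V →ₗ[K] W),
    (∀ n c, f (sg n c) = g (sg n c)) → f = g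
  lift : ∀ (W : Type) [AddCommGroup W] [Module K W] (h : ℕ → R →ₗ[K] W),
    ∃ f : V →ₗ[K] W, ∀ n c, f (sg n c) = h n c

theorem exists_model (K R : Type) [CommRing K] [Ring R] [Algebra K R] :
    ∃ (V : Type) (_ : AddCommGroup V) (_ : Module K V) (sg : ℕ → R →ₗ[K] V)
      (cf : ℕ → V →ₗ[K] R), IsModel K R V sg cf := by
  refine ⟨ℕ →₀ R, inferInstance, inferInstance, fun n => Finsupp.lsingle n,
    fun n => Finsupp.lapply n, ?_, ?_, ?_, ?_⟩
  · intro n c; simp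
  · intro n m c h; simp [h]
  · intro W _ _ f g h
    exact Finsupp.lhom_ext h
  · intro W _ _ h
    exact ⟨Finsupp.lsum K h, fun n c => by simp⟩

theorem ore_exists [IsDomain R] [IsNoetherianRing R] [IsNoetherianRing Rᵐᵒᵖ]
    (σ : R ≃ₐ[K] R) (δ : R →ₗ[K] R) (hδ : ∀ a b, δ (a * b) = σ a * δ b + δ a * b) :
    ∃ (S : Type) (_ : Ring S) (_ : Algebra K S) (i : R →ₐ[K] S) (t : S),
      IsDomain S ∧ IsNoetherianRing S ∧ IsNoetherianRing Sᵐᵒᵖ ∧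
      (∀ r, t * i r = i (σ r) * t + i (δ r)) ∧
      (∀ T : Subalgebra K S, (∀ r, i r ∈ T) → t ∈ T → T = ⊤) ∧
      ∀ (A : Type) [Ring A] [Algebra K A] (ψ : R →ₐ[K] A) (a : A),
        (∀ r, a * ψ r = ψ (σ r) * a + ψ (δ r)) →
        ∃ f : S →ₐ[K] A, (∀ r, f (i r) = ψ r) ∧ f t = a := by
  obtain ⟨V, _, _, sg, cf, hV⟩ := exists_model K R
  have hopL : ∀ r, ∃ f : Module.End K V, ∀ n c, f (sg n c) = sg n (r * c) := fun r =>
    hV.lift V fun n => sg n ∘ₗ LinearMap.mulLeft K r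
  choose opL0 opL0_single using hopL
  let opL : R →ₐ[K] Module.End K V :=
    { toFun := opL0
      map_one' := hV.ext _ _ _ fun n c => by simp [opL0_single]
      map_mul' := fun a b => hV.ext _ _ _ fun n c => by simp [opL0_single, mul_assoc]
      map_zero' := hV.ext _ _ _ fun n c => by simp [opL0_single]
      map_add' := fun a b => hV.ext _ _ _ fun n c => by simp [opL0_single, add_mul]
      commutes' := fun a => hV.ext _ _ _ fun n c => by
        simp [opL0_single, ← Algebra.smul_def] }
  have opL_single : ∀ r n c, opL r (sg n c) = sg n (r * c) := opL0_single
  obtain ⟨opT, opT_single⟩ : ∃ f : Module.End K V, ∀ n c,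
      f (sg n c) = sg (n + 1) (σ c) + sg n (δ c) :=
    hV.lift V fun n => sg (n + 1) ∘ₗ σ.toLinearMap + sg n ∘ₗ δ
  clear_value opL
  let G : Set (Module.End K V) := Set.range opL ∪ {opT}
  let S := Algebra.adjoin K G
  let i : R →ₐ[K] S := opL.codRestrict S
    fun r => Algebra.subset_adjoin (Or.inl ⟨r, rfl⟩)
  let t : S := ⟨opT, Algebra.subset_adjoin (Or.inr rfl)⟩
  have δ1 : δ 1 = 0 := by
    have := hδ 1 1
    simpa using this
  have hc : ∀ r, t * i r = i (σ r) * t + i (δ r) := by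
    intro r
    apply Subtype.ext
    change opT * opL r = opL (σ r) * opT + opL (δ r)
    refine hV.ext _ _ _ fun n c => ?_
    simp only [Module.End.mul_apply, LinearMap.add_apply, opL_single, opT_single, map_add, hδ,
      map_mul]
    abel
  have hgen0 : ∀ P : S → Prop, (∀ r, P (i r)) → P t → (∀ a b, P a → P b → P (a + b)) →
      (∀ a b, P a → P b → P (a * b)) → ∀ s, P s := by
    rintro P h1 h2 h3 h4 ⟨s, hs⟩
    induction hs using Algebra.adjoin_induction with
    | mem x hx =>
      rcases hx with ⟨r, rfl⟩ | hx
      · exact h1 r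
      · obtain rfl : x = opT := hx
        exact h2
    | algebraMap r =>
      have := h1 (algebraMap K R r)
      rwa [AlgHom.commutes] at this
    | add x y hx hy h h' => exact h3 _ _ h h'
    | mul x y hx hy h h' => exact h4 _ _ h h'
  have hgen : ∀ T : Subring S, (∀ r, (i : R →+* S) r ∈ T) → t ∈ T → T = ⊤ := by
    intro T h1 h2
    rw [eq_top_iff]
    intro s _
    exact hgen0 (· ∈ T) h1 h2 (fun _ _ => T.add_mem) (fun _ _ => T.mul_mem) s
  have hpow : ∀ n, ((t : Module.End K V) ^ n) (sg 0 1) =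
      sg n 1 := by
    intro n
    induction n with
    | zero => simp
    | succ n ih =>
      rw [pow_succ', Module.End.mul_apply, ih]
      change opT _ = _
      rw [opT_single]; simp [δ1]
  have hterm : ∀ r n, ((i r * t ^ n : S) : Module.End K V) (sg 0 1) =
      sg n r := by
    intro r n
    rw [Subalgebra.coe_mul, Subalgebra.coe_pow, Module.End.mul_apply, hpow]
    change opL r _ = _
    rw [opL_single, mul_one]
  have hcoef : ∀ n (s : S), Fil (i : R →+* S) t n s → ∀ m, n ≤ m →
      cf m ((s : Module.End K V) (sg 0 1)) = 0 := by
    intro n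
    induction n with
    | zero =>
      intro s hs m _
      rw [show s = 0 from hs]; simp
    | succ n ih =>
      rintro s ⟨r, hr⟩ m hm
      have h1 := ih _ hr m (by omega)
      have h2 := hterm r n
      rw [Subalgebra.coe_sub, LinearMap.sub_apply] at h1
      erw [h2] at h1
      rw [map_sub, hV.cf_ne _ _ _ (by omega), sub_zero] at h1
      exact h1
  have hc' : ∀ r, t * (i : R →+* S) r = (i : R →+* S) ((σ : R ≃+* R) r) * t +
    (i : R →+* S) (δ r) := hc
  have hc'' : ∀ r, t * (i : R →+* S) r = (i : R →+* S) (((σ : R ≃+* R) : R →+* R) r) * t +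
    (i : R →+* S) (δ r) := hc
  refine ⟨S, inferInstance, inferInstance, i, t, ?_, ?_, ?_, hc, ?_, ?_⟩
  · refine isDomain_of hc'' σ.injective (span_of hc'' hgen) ?_
    intro n r h
    have h1 := hcoef n _ h n le_rfl
    erw [hterm r n] at h1
    rwa [hV.cf_same] at h1
  · exact noeth_of hc'' σ.surjective (span_of hc'' hgen)
  · exact noeth_op_of hc' hgen
  · intro T h1 h2
    rw [eq_top_iff]
    intro s _
    exact hgen0 (· ∈ T) h1 h2 (fun _ _ => T.add_mem) (fun _ _ => T.mul_mem) s
  · intro A _ _ ψ a ha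
    obtain ⟨Φ, hΦ⟩ : ∃ Φ : V →ₗ[K] A, ∀ n c, Φ (sg n c) = ψ c * a ^ n :=
      hV.lift A fun n => LinearMap.mulRight K (a ^ n) ∘ₗ ψ.toLinearMap
    have hL : ∀ r p, Φ (opL r p) = ψ r * Φ p := by
      intro r p
      have : Φ ∘ₗ opL r = LinearMap.mulLeft K (ψ r) ∘ₗ Φ := by
        refine hV.ext _ _ _ fun n c => ?_
        simp [opL_single, hΦ, mul_assoc]
      exact LinearMap.congr_fun this p
    have hT : ∀ p, Φ (opT p) = a * Φ p := by
      intro p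
      have : Φ ∘ₗ opT = LinearMap.mulLeft K a ∘ₗ Φ := by
        refine hV.ext _ _ _ fun n c => ?_
        simp [opT_single, hΦ, ← mul_assoc, ha, add_mul, pow_succ']
      exact LinearMap.congr_fun this p
    have h1 : Φ (sg 0 1) = 1 := by simp [hΦ]
    have key : ∀ s : S, ∀ p, Φ ((s : Module.End K V) p) =
        Φ ((s : Module.End K V) (sg 0 1)) * Φ p := by
      refine hgen0 _ ?_ ?_ ?_ ?_
      · intro r p
        change Φ (opL r p) = Φ (opL r _) * _
        rw [hL, hL, h1, mul_one]
      · intro p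
        change Φ (opT p) = Φ (opT _) * _
        rw [hT, hT, h1, mul_one]
      · intro x y hx hy p
        simp only [Subalgebra.coe_add, LinearMap.add_apply, map_add]
        rw [hx p, hy p, add_mul]
      · intro x y hx hy p
        simp only [Subalgebra.coe_mul, Module.End.mul_apply]
        rw [hx ((y : Module.End K V) p), hy p, hx ((y : Module.End K V) (sg 0 1)), mul_assoc]
    refine ⟨AlgHom.ofLinearMap
      (Φ ∘ₗ LinearMap.applyₗ (sg 0 1) ∘ₗ S.val.toLinearMap) ?_ ?_, ?_, ?_⟩
    · simpa using h1
    · intro x y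
      have := key x ((y : Module.End K V) (sg 0 1))
      simpa using this
    · intro r
      change Φ (opL r _) = _
      rw [hL, h1, mul_one]
    · change Φ (opT _) = _
      rw [hT, h1, mul_one]

end
end OreAux

namespace OreAux

/-- upper triangular 2 by 2 matrix -/
def tri {A : Type} [Ring A] (a b c : A) : Matrix (Fin 2) (Fin 2) A := !![a, b; 0, c]

section
variable {A : Type} [Ring A]

theorem tri_mul (a b c a' b' c' : A) :
    tri a b c * tri a' b' c' = tri (a * a') (a * b' + b * c') (c * c') := by
  simp [tri]

theorem tri_add (a b c a' b' c' : A) :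
    tri a b c + tri a' b' c' = tri (a + a') (b + b') (c + c') := by
  ext i j; fin_cases i <;> fin_cases j <;> simp [tri]

theorem tri_sub (a b c a' b' c' : A) :
    tri a b c - tri a' b' c' = tri (a - a') (b - b') (c - c') := by
  ext i j; fin_cases i <;> fin_cases j <;> simp [tri]

theorem tri_neg (a b c : A) : - tri a b c = tri (-a) (-b) (-c) := by
  ext i j; fin_cases i <;> fin_cases j <;> simp [tri]

theorem tri_smul {K : Type} [CommRing K] [Algebra K A] (r : K) (a b c : A) :
    r • tri a b c = tri (r • a) (r • b) (r • c) := by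
  ext i j; fin_cases i <;> fin_cases j <;> simp [tri]

theorem tri_one : (1 : Matrix (Fin 2) (Fin 2) A) = tri 1 0 1 := by
  ext i j; fin_cases i <;> fin_cases j <;> simp [tri]

theorem tri_congr {a b c a' b' c' : A} (h1 : a = a') (h2 : b = b') (h3 : c = c') :
    tri a b c = tri a' b' c' := by rw [h1, h2, h3]

end

/-- A presented algebra with good properties exists. -/
def Pres (K ι : Type) [CommRing K]
    (rel : ∀ (A : Type) [Ring A] [Algebra K A], (ι → A) → Prop) : Prop :=
  ∃ (S : Type) (_ : Ring S) (_ : Algebra K S) (c : ι → S),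
    IsDomain S ∧ IsNoetherianRing S ∧ IsNoetherianRing Sᵐᵒᵖ ∧ rel S c ∧
    (∀ T : Subalgebra K S, (∀ j, c j ∈ T) → T = ⊤) ∧
    ∀ (A : Type) [Ring A] [Algebra K A] (e : ι → A), rel A e → ∃ f : S →ₐ[K] A, ∀ j, f (c j) = e j

/-- relations of one more Ore variable -/
def StepRel {K ι : Type} [CommRing K]
    (rel : ∀ (A : Type) [Ring A] [Algebra K A], (ι → A) → Prop) (p q : ι → FreeAlgebra K ι)
    (A : Type) [Ring A] [Algebra K A] (e : Option ι → A) : Prop :=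
  rel A (fun j => e (some j)) ∧ ∀ j, e none * e (some j) =
    FreeAlgebra.lift K (fun j => e (some j)) (p j) * e none +
    FreeAlgebra.lift K (fun j => e (some j)) (q j)

theorem lift_nat {K ι A B : Type} [CommRing K] [Ring A] [Ring B] [Algebra K A] [Algebra K B]
    (f : A →ₐ[K] B) (c : ι → A) (d : ι → B) (h : ∀ j, f (c j) = d j) (w : FreeAlgebra K ι) :
    f (FreeAlgebra.lift K c w) = FreeAlgebra.lift K d w := by
  have : f.comp (FreeAlgebra.lift K c) = FreeAlgebra.lift K d := by
    ext j; simp [h]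
  exact DFunLike.congr_fun this w

/-- relations are preserved by algebra maps -/
def RelMap {K ι : Type} [CommRing K]
    (rel : ∀ (A : Type) [Ring A] [Algebra K A], (ι → A) → Prop) : Prop :=
  ∀ (A B : Type) [Ring A] [Algebra K A] [Ring B] [Algebra K B] (f : A →ₐ[K] B) (c : ι → A),
    rel A c → rel B (fun j => f (c j))

theorem RelMap.step {K ι : Type} [CommRing K]
    {rel : ∀ (A : Type) [Ring A] [Algebra K A], (ι → A) → Prop} (h : RelMap rel)
    (p q : ι → FreeAlgebra K ι) : RelMap (StepRel rel p q) := by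
  intro A B _ _ _ _ f c hc
  refine ⟨h A B f _ hc.1, fun j => ?_⟩
  rw [← map_mul, hc.2 j, map_add, map_mul, lift_nat f _ _ fun _ => rfl,
    lift_nat f _ _ fun _ => rfl]

theorem Pres.step {K ι : Type} [CommRing K]
    {rel : ∀ (A : Type) [Ring A] [Algebra K A], (ι → A) → Prop} (h : Pres K ι rel)
    (h0 : RelMap rel) (p p' q : ι → FreeAlgebra K ι)
    (h1 : ∀ (A : Type) [Ring A] [Algebra K A] (c : ι → A), rel A c →
      rel A (fun j => FreeAlgebra.lift K c (p j)))
    (h2 : ∀ (A : Type) [Ring A] [Algebra K A] (c : ι → A), rel A c →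
      rel A (fun j => FreeAlgebra.lift K c (p' j)))
    (h3 : ∀ (A : Type) [Ring A] [Algebra K A] (c : ι → A) (j : ι),
      FreeAlgebra.lift K (fun l => FreeAlgebra.lift K c (p l)) (p' j) = c j)
    (h4 : ∀ (A : Type) [Ring A] [Algebra K A] (c : ι → A) (j : ι),
      FreeAlgebra.lift K (fun l => FreeAlgebra.lift K c (p' l)) (p j) = c j)
    (h5 : ∀ (A : Type) [Ring A] [Algebra K A] (c : ι → A), rel A c →
      rel (Matrix (Fin 2) (Fin 2) A)
        (fun j => tri (FreeAlgebra.lift K c (p j)) (FreeAlgebra.lift K c (q j)) (c j))) :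
    Pres K (Option ι) (StepRel rel p q) := by
  obtain ⟨R, _, _, c, i1, i2, i3, hrel, hgen, huniv⟩ := h
  obtain ⟨s1, hs1⟩ := huniv R _ (h1 R c hrel)
  obtain ⟨s2, hs2⟩ := huniv R _ (h2 R c hrel)
  have e1 : s1.comp s2 = AlgHom.id K R := by
    have := hgen (AlgHom.equalizer (s1.comp s2) (AlgHom.id K R)) (fun j => by
      change s1 (s2 (c j)) = c j
      rw [hs2, lift_nat s1 c _ hs1, h3])
    ext r
    have : r ∈ AlgHom.equalizer (s1.comp s2) (AlgHom.id K R) := by rw [this]; trivial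
    exact this
  have e2 : s2.comp s1 = AlgHom.id K R := by
    have := hgen (AlgHom.equalizer (s2.comp s1) (AlgHom.id K R)) (fun j => by
      change s2 (s1 (c j)) = c j
      rw [hs1, lift_nat s2 c _ hs2, h4])
    ext r
    have : r ∈ AlgHom.equalizer (s2.comp s1) (AlgHom.id K R) := by rw [this]; trivial
    exact this
  let σ : R ≃ₐ[K] R := AlgEquiv.ofAlgHom s1 s2 e1 e2
  have hσ : ∀ j, σ (c j) = FreeAlgebra.lift K c (p j) := hs1
  clear_value σ
  obtain ⟨F, hF⟩ := huniv _ _ (h5 R c hrel)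
  let δ : R →ₗ[K] R :=
    { toFun := fun r => F r 0 1
      map_add' := fun a b => by simp
      map_smul' := fun a b => by simp }
  have hFt : ∀ r, F r = tri (σ r) (δ r) r := by
    let T : Subalgebra K R :=
      { carrier := {r | F r = tri (σ r) (δ r) r}
        add_mem' := by
          intro a b ha hb
          simp only [Set.mem_ofPred_eq] at *
          rw [map_add, ha, hb, tri_add, map_add, map_add]
        mul_mem' := by
          intro a b ha hb
          simp only [Set.mem_ofPred_eq] at *
          have : F (a * b) = tri (σ (a * b)) (σ a * δ b + δ a * b) (a * b) := by
            rw [map_mul, ha, hb, tri_mul, map_mul]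
          have h' : δ (a * b) = σ a * δ b + δ a * b := by
            change F (a * b) 0 1 = _
            rw [this]; simp [tri]
          rw [this, h']
        algebraMap_mem' := by
          intro r
          have h' : δ (algebraMap K R r) = 0 := by
            change F (algebraMap K R r) 0 1 = 0
            rw [AlgHom.commutes]; simp [Matrix.algebraMap_matrix_apply]
          simp only [Set.mem_ofPred_eq, h', AlgHom.commutes, AlgEquiv.commutes]
          rw [Algebra.algebraMap_eq_smul_one, tri_one, tri_smul, Algebra.algebraMap_eq_smul_one,
            smul_zero] }
    have hT : T = ⊤ := hgen T fun j => by
      change F (c j) = tri (σ (c j)) (F (c j) 0 1) (c j)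
      rw [hF, hσ]; simp [tri]
    intro r
    have : r ∈ T := by rw [hT]; trivial
    exact this
  have hδ : ∀ a b, δ (a * b) = σ a * δ b + δ a * b := by
    intro a b
    change F (a * b) 0 1 = _
    rw [map_mul, hFt, hFt, tri_mul]; simp [tri]
  have hδc : ∀ j, δ (c j) = FreeAlgebra.lift K c (q j) := by
    intro j
    change F (c j) 0 1 = _
    rw [hF]; simp [tri]
  clear_value δ
  obtain ⟨S, _, _, i, t, j1, j2, j3, hc, hgen', huniv'⟩ := ore_exists σ δ hδ
  have hl : ∀ w, i (FreeAlgebra.lift K c w) = FreeAlgebra.lift K (fun j => i (c j)) w :=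
    lift_nat i c _ fun _ => rfl
  refine ⟨S, inferInstance, inferInstance, fun j => j.elim t fun j => i (c j), j1, j2, j3, ?_, ?_, ?_⟩
  · refine ⟨h0 R S i c hrel, fun j => ?_⟩
    change t * i (c j) = _
    rw [hc, hσ, hδc, hl, hl]; rfl
  · intro T hT
    refine hgen' T ?_ (hT none)
    have := hgen (T.comap i) fun j => hT (some j)
    intro r
    have : r ∈ T.comap i := by rw [this]; trivial
    exact this
  · intro A _ _ e ⟨he, he'⟩
    obtain ⟨ψ, hψ⟩ := huniv A _ he
    have hl := lift_nat ψ c _ hψ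
    have key : ∀ r, e none * ψ r = ψ (σ r) * e none + ψ (δ r) := by
      let T : Subalgebra K R :=
        { carrier := {r | e none * ψ r = ψ (σ r) * e none + ψ (δ r)}
          add_mem' := by
            intro a b ha hb
            simp only [Set.mem_ofPred_eq, map_add, mul_add, add_mul] at *
            rw [ha, hb]; abel
          mul_mem' := by
            intro a b ha hb
            simp only [Set.mem_ofPred_eq, map_add, map_mul, hδ] at *
            rw [← mul_assoc, ha, add_mul, mul_assoc, hb]
            noncomm_ring
          algebraMap_mem' := by
            intro r
            have h' : δ (algebraMap K R r) = 0 := by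
              have h0 : δ 1 = 0 := by simpa using hδ 1 1
              rw [Algebra.algebraMap_eq_smul_one, map_smul, h0, smul_zero]
            simp only [Set.mem_ofPred_eq, h', AlgHom.commutes, AlgEquiv.commutes, map_zero, add_zero]
            exact (Algebra.commutes r (e none)).symm }
      have hT : T = ⊤ := hgen T fun j => by
        change e none * ψ (c j) = ψ (σ (c j)) * e none + ψ (δ (c j))
        rw [hσ, hδc, hl, hl, hψ]; exact he' j
      intro r
      have : r ∈ T := by rw [hT]; trivial
      exact this
    obtain ⟨f, hf, hft⟩ := huniv' A ψ (e none) key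
    refine ⟨f, ?_⟩
    rintro (_ | j)
    · exact hft
    · change f (i (c j)) = _
      rw [hf, hψ]

end OreAux

namespace OreAux

open FreeAlgebra

/-- relations of the Laurent polynomial ring -/
def Rel0 (K : Type) [CommRing K] (A : Type) [Ring A] [Algebra K A] (e : Bool → A) : Prop :=
  e false * e true = 1 ∧ e true * e false = 1

theorem Rel0.map (K : Type) [CommRing K] : RelMap (Rel0 K) := by
  intro A B _ _ _ _ f c hc
  exact ⟨by rw [← map_mul, hc.1, map_one], by rw [← map_mul, hc.2, map_one]⟩

theorem pres0 (K : Type) [Field K] : Pres K Bool (Rel0 K) := by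
  have hn : IsNoetherianRing (LaurentPolynomial K) :=
    IsLocalization.isNoetherianRing (Submonoid.powers (Polynomial.X : Polynomial K)) _ inferInstance
  refine ⟨LaurentPolynomial K, inferInstance, inferInstance,
    fun b => bif b then LaurentPolynomial.T (-1) else LaurentPolynomial.T 1,
    inferInstance, hn, ?_, ?_, ?_, ?_⟩
  · exact isNoetherianRing_of_ringEquiv _ (RingEquiv.toOpposite (LaurentPolynomial K))
  · constructor
    · change LaurentPolynomial.T 1 * LaurentPolynomial.T (-1) = 1
      rw [← LaurentPolynomial.T_add]; exact LaurentPolynomial.T_zero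
    · change LaurentPolynomial.T (-1) * LaurentPolynomial.T 1 = 1
      rw [← LaurentPolynomial.T_add]; exact LaurentPolynomial.T_zero
  · intro T hT
    have h1 : (LaurentPolynomial.T 1 : LaurentPolynomial K) ∈ T := hT false
    have h2 : (LaurentPolynomial.T (-1) : LaurentPolynomial K) ∈ T := hT true
    rw [eq_top_iff]
    intro f _
    induction f using LaurentPolynomial.induction_on with
    | h_C a => exact T.algebraMap_mem a
    | h_add hp hq => exact T.add_mem (hp trivial) (hq trivial)
    | h_C_mul_T n a h =>
      rw [LaurentPolynomial.T_add, ← mul_assoc]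
      exact T.mul_mem (h trivial) h1
    | h_C_mul_T_Z n a h =>
      rw [sub_eq_add_neg, LaurentPolynomial.T_add, ← mul_assoc]
      exact T.mul_mem (h trivial) h2
  · intro A _ _ e he
    let w : Aˣ := ⟨e false, e true, he.1, he.2⟩
    refine ⟨AddMonoidAlgebra.lift K A ℤ ((Units.coeHom A).comp (zpowersHom Aˣ w)), ?_⟩
    rintro (_ | _)
    · refine (AddMonoidAlgebra.lift_single _ _ _).trans ?_
      simp [w]
    · refine (AddMonoidAlgebra.lift_single _ _ _).trans ?_
      simp [w]

end OreAux

namespace OreAux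

open FreeAlgebra

section
variable (K : Type) [Field K]

/-- relations for `x, g, ginv` -/
abbrev Rel1 := StepRel (Rel0 K) (fun j => ι K j) (fun _ => 0)

/-- derivation for `y` -/
noncomputable def q2 : Option Bool → FreeAlgebra K (Option Bool)
  | none => - ((1 / 2 : K) • (ι K none * ι K none))
  | some false => - (ι K none * ι K (some false))
  | some true => ι K none * ι K (some true)

/-- relations for `y, x, g, ginv` -/
abbrev Rel2 := StepRel (Rel1 K) (fun j => ι K j) (q2 K)

/-- derivation for `u` -/
noncomputable def q3 : Option (Option Bool) → FreeAlgebra K (Option (Option Bool))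
  | none => 1 - ι K (some (some false))
  | some _ => 0

/-- relations for `u, y, x, g, ginv` -/
abbrev Rel3 := StepRel (Rel2 K) (fun j => ι K j) (q3 K)

/-- derivation for `ζ` -/
noncomputable def q4 : Option (Option (Option Bool)) → FreeAlgebra K (Option (Option (Option Bool)))
  | none => - ι K none
  | some none => ι K (some none)
  | some (some none) => ι K (some (some none))
  | some (some (some _)) => 0

/-- relations for `ζ, u, y, x, g, ginv` -/
abbrev Rel4 := StepRel (Rel3 K) (fun j => ι K j) (q4 K)

/-- automorphism for `v` -/
noncomputable def p5 : Option (Option (Option (Option Bool))) →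
    FreeAlgebra K (Option (Option (Option (Option Bool))))
  | none => ι K none + 1
  | some j => ι K (some j)

/-- inverse automorphism for `v` -/
noncomputable def p5' : Option (Option (Option (Option Bool))) →
    FreeAlgebra K (Option (Option (Option (Option Bool))))
  | none => ι K none - 1
  | some j => ι K (some j)

/-- skew derivation for `v` -/
noncomputable def q5 : Option (Option (Option (Option Bool))) →
    FreeAlgebra K (Option (Option (Option (Option Bool))))
  | none => 0
  | some none => - ((1 / 2 : K) • (ι K (some none) * ι K (some none)))
  | some (some none) => - (ι K (some (some (some (some false)))) * ι K none) +
      ι K (some (some none)) * ι K (some none)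
  | some (some (some none)) => 1 - ι K (some (some (some (some false)))) +
      ι K (some (some (some none))) * ι K (some none)
  | some (some (some (some false))) => ι K (some (some (some (some false)))) * ι K (some none)
  | some (some (some (some true))) => - (ι K (some none) * ι K (some (some (some (some true)))))

/-- relations for `v, ζ, u, y, x, g, ginv` -/
abbrev Rel5 := StepRel (Rel4 K) (p5 K) (q5 K)

theorem pres1 : Pres K _ (Rel1 K) := by
  refine (pres0 K).step (Rel0.map K) (fun j => ι K j) (fun j => ι K j) (fun _ => 0) ?_ ?_ ?_ ?_ ?_
  · intro A _ _ c h; simpa using h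
  · intro A _ _ c h; simpa using h
  · intro A _ _ c j; simp
  · intro A _ _ c j; simp
  · intro A _ _ c h
    simp only [Rel0, FreeAlgebra.lift_ι_apply, map_zero] at h ⊢
    obtain ⟨h1, h2⟩ := h
    simp [tri_mul, h1, h2, tri_one]

theorem assoc_of {A : Type} [Ring A] {a b c : A} (h : a * b = c) (z : A) :
    a * (b * z) = c * z := by rw [← mul_assoc, h]

theorem pres2 [CharZero K] : Pres K _ (Rel2 K) := by
  refine (pres1 K).step ((Rel0.map K).step _ _) (fun j => ι K j) (fun j => ι K j) (q2 K)
    ?_ ?_ ?_ ?_ ?_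
  · intro A _ _ c h; simpa only [FreeAlgebra.lift_ι_apply] using h
  · intro A _ _ c h; simpa only [FreeAlgebra.lift_ι_apply] using h
  · intro A _ _ c j; simp
  · intro A _ _ c j; simp
  · intro A _ _ c h
    simp only [StepRel, Rel0, q2, Option.forall, Bool.forall_bool, FreeAlgebra.lift_ι_apply,
      map_zero, map_one, map_mul, map_add, map_sub, map_neg, map_smul, add_zero] at h ⊢
    generalize c none = x at *
    generalize c (some false) = g at *
    generalize c (some true) = g' at *
    obtain ⟨⟨h1, h2⟩, h3, h4⟩ := h
    refine ⟨⟨?_, ?_⟩, ?_, ?_⟩ <;>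
    · simp only [tri_mul, tri_add, tri_sub, tri_neg, tri_smul, tri_one]
      apply tri_congr <;>
      simp only [mul_add, add_mul, mul_sub, sub_mul, neg_mul, mul_neg, smul_mul_assoc,
        mul_smul_comm, mul_one, one_mul, mul_assoc, smul_add, smul_sub, smul_neg, mul_zero, zero_mul,
        h1, h2, h3, h4, assoc_of h1, assoc_of h2, assoc_of h3, assoc_of h4] <;> module

theorem pres3 [CharZero K] : Pres K _ (Rel3 K) := by
  refine (pres2 K).step (((Rel0.map K).step _ _).step _ _) (fun j => ι K j) (fun j => ι K j) (q3 K)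
    ?_ ?_ ?_ ?_ ?_
  · intro A _ _ c h; simpa only [FreeAlgebra.lift_ι_apply] using h
  · intro A _ _ c h; simpa only [FreeAlgebra.lift_ι_apply] using h
  · intro A _ _ c j; simp
  · intro A _ _ c j; simp
  · intro A _ _ c h
    simp only [StepRel, Rel0, q2, q3, Option.forall, Bool.forall_bool, FreeAlgebra.lift_ι_apply,
      map_zero, map_one, map_mul, map_add, map_sub, map_neg, map_smul, add_zero] at h ⊢
    generalize c none = y at *
    generalize c (some none) = x at *
    generalize c (some (some false)) = g at *
    generalize c (some (some true)) = g' at *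
    obtain ⟨⟨⟨h1, h2⟩, h3, h4⟩, h5, h6, h7⟩ := h
    refine ⟨⟨⟨?_, ?_⟩, ?_, ?_⟩, ?_, ?_, ?_⟩ <;>
    · simp only [tri_mul, tri_add, tri_sub, tri_neg, tri_smul, tri_one]
      apply tri_congr <;>
      simp only [mul_add, add_mul, mul_sub, sub_mul, neg_mul, mul_neg, smul_mul_assoc,
        mul_smul_comm, mul_one, one_mul, mul_assoc, smul_add, smul_sub, smul_neg, mul_zero, zero_mul,
        h1, h2, h3, h4, assoc_of h1, assoc_of h2, assoc_of h3, assoc_of h4,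
        h5, h6, h7, assoc_of h5, assoc_of h6, assoc_of h7] <;> module

theorem pres4 [CharZero K] : Pres K _ (Rel4 K) := by
  refine (pres3 K).step ((((Rel0.map K).step _ _).step _ _).step _ _)
    (fun j => ι K j) (fun j => ι K j) (q4 K) ?_ ?_ ?_ ?_ ?_
  · intro A _ _ c h; simpa only [FreeAlgebra.lift_ι_apply] using h
  · intro A _ _ c h; simpa only [FreeAlgebra.lift_ι_apply] using h
  · intro A _ _ c j; simp
  · intro A _ _ c j; simp
  · intro A _ _ c h
    simp only [StepRel, Rel0, q2, q3, q4, Option.forall, Bool.forall_bool,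
      FreeAlgebra.lift_ι_apply,
      map_zero, map_one, map_mul, map_add, map_sub, map_neg, map_smul, add_zero] at h ⊢
    generalize c none = u at *
    generalize c (some none) = y at *
    generalize c (some (some none)) = x at *
    generalize c (some (some (some false))) = g at *
    generalize c (some (some (some true))) = g' at *
    obtain ⟨⟨⟨⟨h1, h2⟩, h3, h4⟩, h5, h6, h7⟩, h8, h9, h10, h11⟩ := h
    refine ⟨⟨⟨⟨?_, ?_⟩, ?_, ?_⟩, ?_, ?_, ?_⟩, ?_, ?_, ?_, ?_⟩ <;>
    · simp only [tri_mul, tri_add, tri_sub, tri_neg, tri_smul, tri_one]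
      apply tri_congr <;>
      simp only [mul_add, add_mul, mul_sub, sub_mul, neg_mul, mul_neg, smul_mul_assoc,
        mul_smul_comm, mul_one, one_mul, mul_assoc, smul_add, smul_sub, smul_neg, mul_zero, zero_mul,
        h1, h2, h3, h4, assoc_of h1, assoc_of h2, assoc_of h3, assoc_of h4,
        h5, h6, h7, assoc_of h5, assoc_of h6, assoc_of h7,
        h8, h9, h10, h11, assoc_of h8, assoc_of h9, assoc_of h10, assoc_of h11] <;> module

theorem pres5 [CharZero K] : Pres K _ (Rel5 K) := by
  refine (pres4 K).step (((((Rel0.map K).step _ _).step _ _).step _ _).step _ _)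
    (p5 K) (p5' K) (q5 K) ?_ ?_ ?_ ?_ ?_
  · intro A _ _ c h
    simp only [StepRel, Rel0, q2, q3, q4, p5, Option.forall, Bool.forall_bool,
      FreeAlgebra.lift_ι_apply,
      map_zero, map_one, map_mul, map_add, map_sub, map_neg, map_smul, add_zero] at h ⊢
    obtain ⟨h, h1, h2, h3, h4, h5⟩ := h
    refine ⟨h, ?_, ?_, ?_, ?_, ?_⟩ <;> simp only [add_mul, mul_add, h1, h2, h3, h4, h5] <;>
      noncomm_ring
  · intro A _ _ c h
    simp only [StepRel, Rel0, q2, q3, q4, p5', Option.forall, Bool.forall_bool,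
      FreeAlgebra.lift_ι_apply,
      map_zero, map_one, map_mul, map_add, map_sub, map_neg, map_smul, add_zero] at h ⊢
    obtain ⟨h, h1, h2, h3, h4, h5⟩ := h
    refine ⟨h, ?_, ?_, ?_, ?_, ?_⟩ <;> simp only [sub_mul, mul_sub, h1, h2, h3, h4, h5] <;>
      noncomm_ring
  · rintro A _ _ c (_ | j) <;> simp [p5, p5']
  · rintro A _ _ c (_ | j) <;> simp [p5, p5']
  · intro A _ _ c h
    simp only [StepRel, Rel0, q2, q3, q4, q5, p5, Option.forall, Bool.forall_bool,
      FreeAlgebra.lift_ι_apply,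
      map_zero, map_one, map_mul, map_add, map_sub, map_neg, map_smul, add_zero] at h ⊢
    generalize c none = z at *
    generalize c (some none) = u at *
    generalize c (some (some none)) = y at *
    generalize c (some (some (some none))) = x at *
    generalize c (some (some (some (some false)))) = g at *
    generalize c (some (some (some (some true)))) = g' at *
    obtain ⟨⟨⟨⟨⟨h1, h2⟩, h3, h4⟩, h5, h6, h7⟩, h8, h9, h10, h11⟩, h12, h13, h14, h15, h16⟩ := h
    refine ⟨⟨⟨⟨⟨?_, ?_⟩, ?_, ?_⟩, ?_, ?_, ?_⟩, ?_, ?_, ?_, ?_⟩, ?_, ?_, ?_, ?_, ?_⟩ <;>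
    · simp only [tri_mul, tri_add, tri_sub, tri_neg, tri_smul, tri_one]
      apply tri_congr <;>
      simp only [mul_add, add_mul, mul_sub, sub_mul, neg_mul, mul_neg, smul_mul_assoc,
        mul_smul_comm, mul_one, one_mul, mul_assoc, smul_add, smul_sub, smul_neg, mul_zero, zero_mul,
        h1, h2, h3, h4, assoc_of h1, assoc_of h2, assoc_of h3, assoc_of h4,
        h5, h6, h7, assoc_of h5, assoc_of h6, assoc_of h7,
        h8, h9, h10, h11, assoc_of h8, assoc_of h9, assoc_of h10, assoc_of h11,
        h12, h13, h14, h15, h16, assoc_of h12, assoc_of h13, assoc_of h14, assoc_of h15,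
        assoc_of h16] <;> module

end
end OreAux

end

set_option synthInstance.maxHeartbeats 1000000
set_option maxHeartbeats 2000000

/-- `D` is a domain and is left and right noetherian. -/
theorem D_domain_noetherian :
    IsDomain (D k) ∧ IsNoetherianRing (D k) ∧ IsNoetherianRing (D k)ᵐᵒᵖ := by
  obtain ⟨S, _, _, c, i1, i2, i3, hrel, hgen, huniv⟩ := OreAux.pres5 k
  have r : ∀ {a b}, JRel k a b → Dmk k a = Dmk k b := fun h => RingQuot.mkAlgHom_rel k h
  -- the algebra map from the model to `D`
  obtain ⟨f, hf⟩ : ∃ f : S →ₐ[k] D k, f (c none) = DV k ∧ f (c (some none)) = DZ k ∧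
      f (c (some (some none))) = DU k ∧ f (c (some (some (some none)))) = DY k ∧
      f (c (some (some (some (some none))))) = DX k ∧
      f (c (some (some (some (some (some false)))))) = DG k ∧
      f (c (some (some (some (some (some true)))))) = DGinv k := by
    have r1 := r .gginv
    have r2 := r .ginvg
    have r3 := r .zg
    have r4 := r .gx
    have r5 := r .gy
    have r6 := r .zy
    have r7 := r .zx
    have r8 := r .ug
    have r9 := r .vg
    have r10 := r .vz
    have r11 := r .uz
    have r12 := r .yx
    have r13 := r .vu
    have r14 := r .ux
    have r15 := r .vx
    have r16 := r .uy
    have r17 := r .vy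
    simp only [map_one, map_mul, map_add, map_sub, map_smul] at r1 r2 r3 r4 r5 r6 r7 r8 r9 r10 r11 r12 r13 r14 r15 r16 r17
    let e : Option (Option (Option (Option (Option Bool)))) → D k
      | none => DV k
      | some none => DZ k
      | some (some none) => DU k
      | some (some (some none)) => DY k
      | some (some (some (some none))) => DX k
      | some (some (some (some (some false)))) => DG k
      | some (some (some (some (some true)))) => DGinv k
    obtain ⟨f, hf⟩ := huniv (D k) e (by
      simp only [OreAux.StepRel, OreAux.Rel0, OreAux.q2, OreAux.q3, OreAux.q4, OreAux.q5,
        OreAux.p5, Option.forall, Bool.forall_bool, FreeAlgebra.lift_ι_apply,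
        map_zero, map_one, map_mul, map_add, map_sub, map_neg, map_smul, add_zero, e,
        DU, DV, DZ, DG, DGinv, DX, DY]
      generalize Dmk k (ι k .u) = u at *
      generalize Dmk k (ι k .v) = v at *
      generalize Dmk k (ι k .zeta) = z at *
      generalize Dmk k (ι k .g) = g at *
      generalize Dmk k (ι k .ginv) = g' at *
      generalize Dmk k (ι k .x) = x at *
      generalize Dmk k (ι k .y) = y at *
      -- `t g = g t + d` gives `t g' = g' t - g' d g'`
      have inv : ∀ t d : D k, t * g = g * t + d → t * g' = g' * t - g' * d * g' := by
        intro t d h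
        have h1 : g' * (t * g) * g' = g' * (g * t + d) * g' := by rw [h]
        have h2 : g' * (t * g) * g' = g' * t := by
          rw [mul_assoc, mul_assoc t, r1, mul_one]
        have h3 : g' * (g * t + d) * g' = t * g' + g' * d * g' := by
          rw [mul_add, add_mul, ← mul_assoc g' g t, r2, one_mul]
        rw [h2, h3] at h1
        rw [h1]; abel
      have s1 : x * g' = g' * x := by simpa using inv x 0 (by rw [r4, add_zero])
      have s2 : u * g' = g' * u := by simpa using inv u 0 (by rw [r8, add_zero])
      have s3 : z * g' = g' * z := by simpa using inv z 0 (by rw [r3, add_zero])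
      have s4 : y * g' = g' * y + x * g' := by
        have := inv y (-(x * g)) (by rw [r5]; abel)
        rw [this, ← r4]
        rw [mul_neg, neg_mul, sub_neg_eq_add, ← mul_assoc g' g x, r2, one_mul]
      have s5 : v * g' = g' * v + -(u * g') := by
        have := inv v (g * u) r9
        rw [this, ← mul_assoc g' g u, r2, one_mul, sub_eq_add_neg]
      refine ⟨⟨⟨⟨⟨⟨r1, r2⟩, r4.symm, s1⟩, ?_, ?_, s4⟩, r16, r14, r8, s2⟩, ?_, r6, r7, r3, s3⟩, ?_, ?_, ?_, ?_, r9, s5⟩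
      · rw [r12]; abel
      · rw [r5]; abel
      · rw [r11]; abel
      · rw [r10]; noncomm_ring
      · rw [r13]; abel
      · rw [r17]; abel
      · rw [r15]; abel)
    exact ⟨f, hf _, hf _, hf _, hf _, hf _, hf _, hf _⟩
  obtain ⟨fv, fz, fu, fy, fx, fg, fg'⟩ := hf
  -- the algebra map from `D` to the model
  let e : JGen → S
    | .v => c none
    | .zeta => c (some none)
    | .u => c (some (some none))
    | .y => c (some (some (some none)))
    | .x => c (some (some (some (some none))))
    | .g => c (some (some (some (some (some false)))))
    | .ginv => c (some (some (some (some (some true)))))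
  obtain ⟨h, hh⟩ : ∃ h : D k →ₐ[k] S, ∀ j, h (Dmk k (ι k j)) = e j := by
    have hrel' : ∀ ⦃a b⦄, JRel k a b → FreeAlgebra.lift k e a = FreeAlgebra.lift k e b := by
      simp only [OreAux.StepRel, OreAux.Rel0, OreAux.q2, OreAux.q3, OreAux.q4, OreAux.q5,
        OreAux.p5, Option.forall, Bool.forall_bool, FreeAlgebra.lift_ι_apply,
        map_zero, map_one, map_mul, map_add, map_sub, map_neg, map_smul, add_zero] at hrel
      obtain ⟨⟨⟨⟨⟨⟨r1, r2⟩, r3, r4⟩, r5, r6, r7⟩, r8, r9, r10, r11⟩, r12, r13, r14, r15, r16⟩,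
        r17, r18, r19, r20, r21, r22⟩ := hrel
      intro a b hab
      cases hab <;> simp only [FreeAlgebra.lift_ι_apply, map_one, map_mul, map_add, map_sub,
        map_smul, e]
      · exact r1
      · exact r2
      · exact r15
      · exact r3.symm
      · rw [r6]; abel
      · exact r13
      · exact r14
      · exact r10
      · exact r21
      · rw [r17]; noncomm_ring
      · rw [r12]; abel
      · rw [r5]; abel
      · rw [r18]; abel
      · exact r9
      · rw [r20]; abel
      · exact r8
      · rw [r19]; abel
    refine ⟨RingQuot.liftAlgHom k ⟨FreeAlgebra.lift k e, hrel'⟩, fun j => ?_⟩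
    refine (RingQuot.liftAlgHom_mkAlgHom_apply k _ _ _).trans ?_
    simp
  have hfh : ∀ d, f (h d) = d := by
    intro d
    obtain ⟨w, rfl⟩ := RingQuot.mkAlgHom_surjective k (JRel k) d
    have : (f.comp h).comp (Dmk k) = Dmk k := by
      apply FreeAlgebra.hom_ext
      funext j
      change f (h (Dmk k (ι k j))) = Dmk k (ι k j)
      rw [hh]
      cases j
      · exact fu
      · exact fv
      · exact fz
      · exact fg
      · exact fg'
      · exact fx
      · exact fy
    exact DFunLike.congr_fun this w
  have hinj : Function.Injective h := Function.LeftInverse.injective hfh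
  have hsurj : Function.Surjective f := fun d => ⟨h d, hfh d⟩
  refine ⟨hinj.isDomain h.toRingHom, isNoetherianRing_of_surjective S (D k) f.toRingHom hsurj,
    isNoetherianRing_of_surjective Sᵐᵒᵖ (D k)ᵐᵒᵖ (RingHom.op f.toRingHom) ?_⟩
  intro d
  obtain ⟨s, hs⟩ := hsurj d.unop
  exact ⟨MulOpposite.op s, by
    apply MulOpposite.unop_injective
    simpa using hs⟩
end
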